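/- arXiv:2310.09041 — 3 statements merged into one kernel-verified Lean document; each statement's English description precedes it below -/
import Mathlib

section
/- Let a : (0,1) → [0,∞) be bounded. Then there exist constants D₁, D₂ > 0 and η̂ ∈ (0,1] such that for all η ∈ (0, η̂): ∫₀^∞ |γ_η(x) + η a(η) γ_η'(x)| dx ≤ η D₁ + |1 + a(η) γ'(0)| D₂. -/
/-!
Factoring `γ ^ (1/η) = γ ^ (1/η - 1) * γ`, the integrand is `c_η γ ^ (1/η - 1) |γ + a γ'|`.

Write `g = -γ'(0)`. The bound on `γ''` makes `γ'` Lipschitz up to `0`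
(`Kernel.abs_dγ_sub_le`), so on some `(0, r]` one has `1 - 2 g x ≤ γ x ≤ 1 - (g/2) x`
(`Kernel.exists_linear_bounds`).

* The lower bound and Bernoulli's inequality give `c_η ≤ 8 g / η` (`Kernel.c_le`).
* On `(0, r]` the upper bound gives the exponential decay `γ ^ (1/η - 1) ≤ exp (-g x / (4 η))`,
  while `|γ + a γ'| ≤ |1 + a γ'(0)| + O(x)`. Integrating gains a factor `η` for the first summand
  and `η²` for the second.
* Beyond `r` the kernel is at most `γ r ≤ exp (-(g/2) r)`, so `γ ^ (1/η - 1)` is exponentially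
  small in `1/η`, and `γ + a |γ'|` is integrable.

Since `c_η = O(1/η)`, the sum has the asserted form.
-/

open MeasureTheory Real Set Filter Topology

/-- A nonlocal kernel `γ : [0,∞) → [0,∞)` with fixed support, together with its
(one-sided) derivative `dγ` and second derivative `ddγ` on a neighborhood `(0,δ)` of zero,
satisfying Assumption 2.2 of the paper. -/
structure Kernel where
  γ : ℝ → ℝ
  dγ : ℝ → ℝ
  ddγ : ℝ → ℝ
  δ : ℝ
  δ_pos : 0 < δ
  nonneg : ∀ x, 0 ≤ x → 0 ≤ γ x
  /-- `γ` is integrable on `(0,∞)` -/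
  integrable : MeasureTheory.IntegrableOn γ (Set.Ioi 0)
  /-- `γ` has finite total variation on `(0,∞)` -/
  bv : BoundedVariationOn γ (Set.Ioi 0)
  /-- `γ` is differentiable on `[0,δ)` (one-sided at `0`) with derivative `dγ` -/
  deriv_Ico : ∀ x ∈ Set.Ico 0 δ, HasDerivWithinAt γ (dγ x) (Set.Ici 0) x
  /-- `dγ` is differentiable on `(0,δ)` with derivative `ddγ` -/
  deriv2_Ioo : ∀ x ∈ Set.Ioo 0 δ, HasDerivWithinAt dγ (ddγ x) (Set.Ioo 0 δ) x
  /-- the second derivative is (essentially) bounded on `(0,δ)` -/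
  ddγ_bdd : ∃ C, ∀ x ∈ Set.Ioo 0 δ, |ddγ x| ≤ C
  /-- negative derivative at zero -/
  dγ0_neg : dγ 0 < 0
  /-- upper bound on `(δ,∞)`: values near zero dominate the tail -/
  upper : ∀ x ∈ Set.Ioo 0 δ, ∀ y, δ < y → γ y ≤ γ x
  /-- strict monotonicity on `(0,δ)` -/
  dγ_neg : ∀ x ∈ Set.Ioo 0 δ, dγ x < 0
  /-- normalization -/
  γ0 : γ 0 = 1

/-- The normalization constant `c_η = (∫₀^∞ γ(y)^{1/η} dy)⁻¹`. -/
noncomputable def Kernel.c (K : Kernel) (η : ℝ) : ℝ :=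
  (∫ y in Set.Ioi (0:ℝ), K.γ y ^ (1/η))⁻¹

/-- The scaled kernel `γ_η(x) = c_η γ(x)^{1/η}` (power scaling). -/
noncomputable def Kernel.γη (K : Kernel) (η x : ℝ) : ℝ := K.c η * K.γ x ^ (1/η)

/-- The (a.e.) derivative of the scaled kernel: `γ_η'(x) = c_η (1/η) γ(x)^{1/η-1} γ'(x)`. -/
noncomputable def Kernel.dγη (K : Kernel) (η x : ℝ) : ℝ :=
  K.c η * (1/η) * K.γ x ^ (1/η - 1) * K.dγ x

/-- Local absolute continuity of `γ` on `(0,∞)`: `γ` is a.e. differentiable with derivative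
`dγ`, which is integrable with `∫₀^∞ |γ'| ≤ |γ|_{TV((0,∞))}`. -/
def Kernel.AC (K : Kernel) : Prop :=
  (∀ᵐ x ∂(MeasureTheory.volume.restrict (Set.Ioi (0:ℝ))), HasDerivAt K.γ (K.dγ x) x) ∧
    MeasureTheory.IntegrableOn K.dγ (Set.Ioi 0) ∧
    (∫ x in Set.Ioi (0:ℝ), |K.dγ x|) ≤ (eVariationOn K.γ (Set.Ioi 0)).toReal

/-- The nonlocal operator `W[q,γ](x) = ∫_x^∞ γ(y-x) q(y) dy` (at fixed time). -/
noncomputable def Wop (γ : ℝ → ℝ) (q : ℝ → ℝ) (x : ℝ) : ℝ :=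
  ∫ y in Set.Ioi x, γ (y - x) * q y

/-- The exponential surrogate nonlocal term `E(x) = (1/ν) ∫_x^∞ exp((x-y)/ν) q(y) dy`. -/
noncomputable def Eop (ν : ℝ) (q : ℝ → ℝ) (x : ℝ) : ℝ :=
  (1/ν) * ∫ y in Set.Ioi x, Real.exp ((x - y)/ν) * q y

namespace Kernel

lemma exists_slope (K : Kernel) {x y : ℝ} (hx : 0 ≤ x) (hxy : x < y) (hy : y < K.δ) :
    ∃ ξ ∈ Ioo x y, K.γ y - K.γ x = K.dγ ξ * (y - x) := by
  obtain ⟨ξ, hξ, h⟩ := exists_hasDerivAt_eq_slope K.γ K.dγ hxy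
    (fun t ht => ((K.deriv_Ico t ⟨hx.trans ht.1, ht.2.trans_lt hy⟩).continuousWithinAt).mono
      (fun s hs => hx.trans hs.1))
    (fun t ht => (K.deriv_Ico t ⟨hx.trans ht.1.le, ht.2.trans hy⟩).hasDerivAt
      (Ici_mem_nhds (hx.trans_lt ht.1)))
  refine ⟨ξ, hξ, ?_⟩
  rw [h, div_mul_cancel₀ _ (sub_pos.2 hxy).ne']

lemma γ_anti (K : Kernel) {x y : ℝ} (hx : 0 ≤ x) (hxy : x ≤ y) (hy : y < K.δ) :
    K.γ y ≤ K.γ x := by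
  rcases hxy.eq_or_lt with rfl | hlt
  · exact le_rfl
  obtain ⟨ξ, hξ, h⟩ := K.exists_slope hx hlt hy
  have := mul_neg_of_neg_of_pos (K.dγ_neg ξ ⟨hx.trans_lt hξ.1, hξ.2.trans hy⟩) (sub_pos.2 hlt)
  linarith

/-- The point `δ` is excluded because the hypotheses do not control the value of `γ` there. -/
lemma γ_le_of_le (K : Kernel) {r x : ℝ} (hr : 0 < r) (hrδ : r < K.δ) (hx : r ≤ x)
    (hxδ : x ≠ K.δ) : K.γ x ≤ K.γ r := by
  rcases lt_or_gt_of_ne hxδ with h | h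
  · exact K.γ_anti hr.le hx h
  · exact K.upper r ⟨hr, hrδ⟩ x h

lemma γ_le_one (K : Kernel) {x : ℝ} (hx : 0 < x) (hxδ : x ≠ K.δ) : K.γ x ≤ 1 := by
  rcases lt_or_gt_of_ne hxδ with h | h
  · exact K.γ0 ▸ K.γ_anti le_rfl hx.le h
  · have h2 := half_pos K.δ_pos
    have h3 := half_lt_self K.δ_pos
    exact (K.upper _ ⟨h2, h3⟩ x h).trans (K.γ0 ▸ K.γ_anti le_rfl h2.le h3)

/-- The one-sided derivative at `0` is the limit of `dγ`, with a linear rate: the difference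
quotients at `0` are values of the Lipschitz function `dγ` at intermediate points. -/
lemma abs_dγ_sub_le (K : Kernel) {C : ℝ} (hC : ∀ x ∈ Ioo 0 K.δ, |K.ddγ x| ≤ C)
    {y : ℝ} (hy : y ∈ Ioo 0 K.δ) : |K.dγ y - K.dγ 0| ≤ C * y := by
  have hC0 : 0 ≤ C := (abs_nonneg _).trans (hC y hy)
  have hlim : Tendsto (slope K.γ 0) (𝓝[>] 0) (𝓝 (K.dγ 0)) := by
    exact (hasDerivWithinAt_iff_tendsto_slope' self_notMem_Ioi).1
      ((K.deriv_Ico 0 ⟨le_rfl, K.δ_pos⟩).mono Ioi_subset_Ici_self)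
  have hlim2 := (tendsto_const_nhds (x := K.dγ y)).sub hlim |>.abs
  refine le_of_tendsto hlim2 ?_
  filter_upwards [Ioo_mem_nhdsGT hy.1] with t ht
  obtain ⟨ξ, hξ, h⟩ := K.exists_slope le_rfl ht.1 (ht.2.trans hy.2)
  have hs : slope K.γ 0 t = K.dγ ξ := by
    rw [slope_def_field, h, mul_div_cancel_right₀]
    linarith [ht.1]
  have hlip := (convex_Ioo 0 K.δ).norm_image_sub_le_of_norm_hasDerivWithin_le
    K.deriv2_Ioo (fun x hx => by simpa using hC x hx)
    (⟨hξ.1, (hξ.2.trans ht.2).trans hy.2⟩ : ξ ∈ Ioo 0 K.δ) hy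
  rw [Real.norm_eq_abs, Real.norm_eq_abs, abs_of_pos (by linarith [hξ.2, ht.2] : 0 < y - ξ)] at hlip
  rw [hs]
  exact hlip.trans (mul_le_mul_of_nonneg_left (by linarith [hξ.1]) hC0)

lemma exists_linear_bounds (K : Kernel) : ∃ r ∈ Ioo 0 K.δ, ∃ C ≥ (0:ℝ), ∀ x ∈ Ioc 0 r,
    |K.dγ x - K.dγ 0| ≤ C * x ∧ 1 - 2 * (-K.dγ 0) * x ≤ K.γ x ∧
      K.γ x ≤ 1 - (-K.dγ 0) / 2 * x := by
  obtain ⟨C, hC⟩ := K.ddγ_bdd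
  have hδ := K.δ_pos
  have hC0 : 0 ≤ C := (abs_nonneg _).trans (hC (K.δ / 2) ⟨half_pos hδ, half_lt_self hδ⟩)
  have hg := K.dγ0_neg
  set g := -K.dγ 0 with hgdef
  have hg0 : 0 < g := by linarith
  refine ⟨min (K.δ / 2) (g / (2 * (C + 1))), ⟨by positivity,
    (min_le_left _ _).trans_lt (half_lt_self hδ)⟩, C, hC0, fun x hx => ?_⟩
  have hx1 : x < K.δ := (hx.2.trans (min_le_left _ _)).trans_lt (half_lt_self hδ)
  have hx2 : x ≤ g / (2 * (C + 1)) := hx.2.trans (min_le_right _ _)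
  rw [le_div_iff₀ (by positivity)] at hx2
  refine ⟨K.abs_dγ_sub_le hC ⟨hx.1, hx1⟩, ?_⟩
  obtain ⟨ξ, hξ, h⟩ := K.exists_slope le_rfl hx.1 hx1
  have h1 := abs_le.1 (K.abs_dγ_sub_le hC ⟨hξ.1, hξ.2.trans hx1⟩)
  have h2 : C * ξ ≤ C * x := mul_le_mul_of_nonneg_left hξ.2.le hC0
  have h3 : C * x ≤ g / 2 := by nlinarith [hx.1]
  rw [K.γ0, sub_zero] at h
  have hx0 := hx.1
  constructor
  · have : -(2 * g) * x ≤ K.dγ ξ * x := mul_le_mul_of_nonneg_right (by linarith) hx0.le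
    linarith
  · have : K.dγ ξ * x ≤ -(g / 2) * x := mul_le_mul_of_nonneg_right (by linarith) hx0.le
    linarith

lemma ae_ne_δ (K : Kernel) : ∀ᵐ x ∂(volume.restrict (Ioi (0:ℝ))), x ≠ K.δ :=
  ae_restrict_of_ae (Measure.ae_ne volume K.δ)

lemma integrableOn_rpow (K : Kernel) {p : ℝ} (hp : 1 ≤ p) :
    IntegrableOn (fun x => K.γ x ^ p) (Ioi 0) := by
  refine Integrable.mono' K.integrable
    (K.integrable.aestronglyMeasurable.aemeasurable.pow_const p).aestronglyMeasurable ?_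
  filter_upwards [K.ae_ne_δ, ae_restrict_mem measurableSet_Ioi] with x hx hx0
  have h0 := K.nonneg x (le_of_lt hx0)
  rw [Real.norm_eq_abs, abs_of_nonneg (Real.rpow_nonneg h0 p)]
  exact Real.rpow_le_self_of_le_one h0 (K.γ_le_one hx0 hx) hp

lemma c_nonneg (K : Kernel) (η : ℝ) : 0 ≤ K.c η :=
  inv_nonneg.2 (setIntegral_nonneg measurableSet_Ioi
    fun x hx => Real.rpow_nonneg (K.nonneg x (le_of_lt hx)) _)

/-- By Bernoulli's inequality `γ ^ (1/η) ≥ 1/2` on `(0, η / (2 L)]`, an interval on which the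
linear lower bound holds. -/
lemma c_le (K : Kernel) {L r η : ℝ} (hL : 0 < L)
    (hlow : ∀ x ∈ Ioc 0 r, 1 - L * x ≤ K.γ x) (hη : 0 < η) (hη1 : η ≤ 1)
    (hηr : η ≤ 2 * L * r) : K.c η ≤ 4 * L / η := by
  set s := η / (2 * L) with hs
  have hs0 : 0 < s := by positivity
  have hsr : s ≤ r := by rw [hs, div_le_iff₀ (by positivity)]; linarith
  have hp : 1 ≤ 1 / η := by rw [le_div_iff₀ hη]; linarith
  have key : η / (4 * L) ≤ ∫ y in Ioi (0:ℝ), K.γ y ^ (1/η) := by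
    calc η / (4 * L) = ∫ _ in Ioc 0 s, (1/2 : ℝ) := by
          rw [setIntegral_const, Real.volume_real_Ioc_of_le hs0.le, smul_eq_mul, hs]
          field_simp
          ring
      _ ≤ ∫ y in Ioc 0 s, K.γ y ^ (1/η) := by
          refine setIntegral_mono_on (integrableOn_const (by simp))
            ((K.integrableOn_rpow hp).mono_set Ioc_subset_Ioi_self) measurableSet_Ioc ?_
          intro x hx
          have h1 : L * x ≤ η / 2 := by
            have := mul_le_mul_of_nonneg_left hx.2 hL.le
            have e : L * s = η / 2 := by rw [hs]; field_simp
            linarith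
          have h2 := one_add_mul_self_le_rpow_one_add (s := -(L * x)) (by linarith) hp
          have h3 : (1 + -(L * x)) ^ (1/η) ≤ K.γ x ^ (1/η) :=
            Real.rpow_le_rpow (by linarith)
              (by linarith [hlow x ⟨hx.1, hx.2.trans hsr⟩]) (by positivity)
          have h4 : 1 / η * (L * x) ≤ 1 / 2 := by
            calc 1 / η * (L * x) ≤ 1 / η * (η / 2) :=
                  mul_le_mul_of_nonneg_left h1 (by positivity)
              _ = 1 / 2 := by field_simp
          linarith
      _ ≤ _ := by
          refine setIntegral_mono_set (K.integrableOn_rpow hp) ?_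
            (Eventually.of_forall fun x hx => hx.1)
          filter_upwards [ae_restrict_mem measurableSet_Ioi] with x hx
          exact Real.rpow_nonneg (K.nonneg x (le_of_lt hx)) _
  calc K.c η ≤ (η / (4 * L))⁻¹ := inv_anti₀ (by positivity) key
    _ = 4 * L / η := inv_div _ _

lemma rpow_le_exp {u t p q : ℝ} (hu : 0 ≤ u) (hut : u ≤ 1 - t) (ht : 0 ≤ t) (hq : 0 ≤ q)
    (hpq : q ≤ p) : u ^ p ≤ exp (-(t * q)) := by
  have h1 : u ≤ exp (-t) := by linarith [Real.add_one_le_exp (-t)]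
  calc u ^ p ≤ exp (-t) ^ p := Real.rpow_le_rpow hu h1 (hq.trans hpq)
    _ = exp (-t * p) := (Real.exp_mul _ _).symm
    _ ≤ exp (-(t * q)) := Real.exp_le_exp.2 (by nlinarith)

/-- Half of the decay rate absorbs the linear factor. -/
lemma add_mul_mul_exp_le {B M μ x : ℝ} (hB : 0 ≤ B) (hM : 0 ≤ M) (hμ : 0 < μ) (hx : 0 ≤ x) :
    exp (-(2 * μ * x)) * (B + M * x) ≤ (B + M / μ) * exp (-μ * x) := by
  have e : exp (-(2 * μ * x)) = exp (-μ * x) * exp (-μ * x) := by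
    rw [← Real.exp_add]; ring_nf
  have h1 : exp (-μ * x) ≤ 1 := Real.exp_le_one_iff.2 (by nlinarith)
  have hmx : μ * x * exp (-μ * x) ≤ 1 := by
    have h := Real.add_one_le_exp (μ * x)
    calc μ * x * exp (-μ * x) ≤ exp (μ * x) * exp (-μ * x) :=
          mul_le_mul_of_nonneg_right (by linarith) (Real.exp_pos _).le
      _ = 1 := by rw [← Real.exp_add]; simp
  have h2 : x * exp (-μ * x) ≤ 1 / μ := by
    rw [le_div_iff₀ hμ]; linarith
  have h3 : exp (-μ * x) * (B + M * x) ≤ B + M / μ := by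
    have := mul_le_mul_of_nonneg_left h1 hB
    have := mul_le_mul_of_nonneg_left h2 hM
    rw [mul_one_div] at this
    linarith
  rw [e, mul_assoc, mul_comm (B + M / μ)]
  exact mul_le_mul_of_nonneg_left h3 (Real.exp_pos _).le

lemma exp_neg_two_mul_le {y : ℝ} (hy : 0 < y) : exp (-(2 * y)) ≤ 1 / y ^ 2 := by
  have e : exp (-(2 * y)) = exp (-y) ^ 2 := by
    rw [← Real.exp_nat_mul]; push_cast; ring_nf
  have h : exp (-y) ≤ 1 / y := by
    rw [Real.exp_neg, ← one_div]
    exact one_div_le_one_div_of_le hy (by linarith [Real.add_one_le_exp y])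
  rw [e, ← one_div_pow]
  exact pow_le_pow_left₀ (Real.exp_pos _).le h 2

/-- The integrand factorizes through `γ ^ (1/η - 1)`, also where `γ` vanishes. -/
lemma abs_integrand (K : Kernel) {η x : ℝ} (hη : 0 < η) (hx : 0 ≤ x) (α : ℝ) :
    |K.γη η x + η * α * K.dγη η x|
      = K.c η * (K.γ x ^ (1/η - 1) * |K.γ x + α * K.dγ x|) := by
  have h0 := K.nonneg x hx
  have e : K.γ x ^ (1/η) = K.γ x ^ (1/η - 1) * K.γ x := by
    rw [← Real.rpow_add_one' h0 (by rw [sub_add_cancel]; positivity), sub_add_cancel]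
  have : K.γη η x + η * α * K.dγη η x
      = K.c η * (K.γ x ^ (1/η - 1) * (K.γ x + α * K.dγ x)) := by
    unfold γη dγη
    rw [e]
    field_simp
  rw [this, abs_mul, abs_mul, abs_of_nonneg (K.c_nonneg η),
    abs_of_nonneg (Real.rpow_nonneg h0 _)]

end Kernel

/-- Proposition 4.3: let `a : (0,1) → [0,∞)` be bounded. Then there exist
constants `D₁, D₂ > 0` and `ηhat ∈ (0,1]` such that for all `η ∈ (0,ηhat)`:
`∫₀^∞ |γ_η(x) + η a(η) γ_η'(x)| dx ≤ η D₁ + |1 + a(η) γ'(0)| D₂`. -/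
theorem kernel_derivative_estimate (K : Kernel) (hK : K.AC)
    (a : ℝ → ℝ) (ha_nonneg : ∀ η ∈ Set.Ioo (0:ℝ) 1, 0 ≤ a η)
    (ha_bdd : ∃ A, ∀ η ∈ Set.Ioo (0:ℝ) 1, a η ≤ A) :
    ∃ D₁ > (0:ℝ), ∃ D₂ > (0:ℝ), ∃ ηhat ∈ Set.Ioc (0:ℝ) 1, ∀ η ∈ Set.Ioo (0:ℝ) ηhat,
      (∫ x in Set.Ioi (0:ℝ), |K.γη η x + η * a η * K.dγη η x|)
        ≤ η * D₁ + |1 + a η * K.dγ 0| * D₂ := by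
  obtain ⟨A, hA⟩ := ha_bdd
  have hA0 : 0 ≤ A := (ha_nonneg (1/2) (by norm_num)).trans (hA (1/2) (by norm_num))
  obtain ⟨r, hr, C, hC0, hb⟩ := K.exists_linear_bounds
  have hg : 0 < -K.dγ 0 := neg_pos.2 K.dγ0_neg
  set g := -K.dγ 0 with hgdef
  have hr0 := hr.1
  set M := 2 * g + A * C with hM
  have hM0 : 0 ≤ M := by positivity
  set N := ∫ x in Ioi (0:ℝ), (K.γ x + A * |K.dγ x|) with hN
  have hN0 : 0 ≤ N := setIntegral_nonneg measurableSet_Ioi fun x hx =>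
    add_nonneg (K.nonneg x (le_of_lt hx)) (mul_nonneg hA0 (abs_nonneg _))
  have hNint : IntegrableOn (fun x => K.γ x + A * |K.dγ x|) (Ioi 0) :=
    K.integrable.add (hK.2.1.abs.const_mul A)
  refine ⟨512 / g * (M + N / r ^ 2) + 1, by positivity, 64, by norm_num,
    min (1/2) (4 * g * r), ⟨by positivity, (min_le_left _ _).trans (by norm_num)⟩, ?_⟩
  rintro η ⟨hη, hη'⟩
  have hη2 : η < 1/2 := hη'.trans_le (min_le_left _ _)
  have hηr : η < 4 * g * r := hη'.trans_le (min_le_right _ _)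
  have ha0 := ha_nonneg η ⟨hη, by linarith⟩
  have haA := hA η ⟨hη, by linarith⟩
  have hc0 := K.c_nonneg η
  have hc : K.c η ≤ 8 * g / η := by
    have := K.c_le (L := 2 * g) (r := r) (by positivity) (fun x hx => (hb x hx).2.1) hη
      (by linarith) (by linarith)
    convert this using 2
    ring
  have hp : 1 / (2 * η) ≤ 1 / η - 1 := by
    rw [← sub_nonneg]
    have : 1 / η - 1 - 1 / (2 * η) = (1 - 2 * η) / (2 * η) := by field_simp; ring
    rw [this]
    exact div_nonneg (by linarith) (by positivity)
  set B := |1 + a η * K.dγ 0| with hB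
  have hB0 : 0 ≤ B := abs_nonneg _
  -- The decay rate of `γ ^ (1/η - 1)` is at least `(g/2) / (2 η) = 2 μ`.
  set μ := g / (8 * η) with hμ
  have hμ0 : 0 < μ := by positivity
  have hrate : ∀ x, g / 2 * x * (1 / (2 * η)) = 2 * μ * x := by
    intro x; rw [hμ]; field_simp; ring
  have hbound : (∫ x in Ioi (0:ℝ), |K.γη η x + η * a η * K.dγη η x|)
      ≤ ∫ x in Ioi (0:ℝ), K.c η * ((B + M / μ) * exp (-μ * x)
        + exp (-(2 * (μ * r))) * (K.γ x + A * |K.dγ x|)) := by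
    refine integral_mono_of_nonneg (Eventually.of_forall fun _ => abs_nonneg _)
      ((((exp_neg_integrableOn_Ioi 0 hμ0).const_mul _).add (hNint.const_mul _)).const_mul _) ?_
    filter_upwards [K.ae_ne_δ, ae_restrict_mem measurableSet_Ioi] with x hxδ hx0
    have hx0 : 0 < x := hx0
    have hγ0 := K.nonneg x hx0.le
    rw [K.abs_integrand hη hx0.le]
    refine mul_le_mul_of_nonneg_left ?_ hc0
    rcases le_or_gt x r with hxr | hxr
    · obtain ⟨h1, h2, h3⟩ := hb x ⟨hx0, hxr⟩
      have hpow := Kernel.rpow_le_exp hγ0 h3 (by positivity) (by positivity) hp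
      rw [hrate] at hpow
      have hfac : |K.γ x + a η * K.dγ x| ≤ B + M * x := by
        have e : K.γ x + a η * K.dγ x
            = (1 + a η * K.dγ 0) + ((K.γ x - 1) + a η * (K.dγ x - K.dγ 0)) := by ring
        have h4 : |K.γ x - 1| ≤ 2 * g * x :=
          abs_le.2 ⟨by linarith, by nlinarith [mul_pos hg hx0]⟩
        have h5 : |a η * (K.dγ x - K.dγ 0)| ≤ A * (C * x) := by
          rw [abs_mul, abs_of_nonneg ha0]
          exact mul_le_mul haA h1 (abs_nonneg _) hA0
        rw [e, hM]
        refine (abs_add_le _ _).trans ?_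
        linarith [abs_add_le (K.γ x - 1) (a η * (K.dγ x - K.dγ 0))]
      have hnn : 0 ≤ exp (-(2 * (μ * r))) * (K.γ x + A * |K.dγ x|) := by positivity
      have := mul_le_mul hpow hfac (abs_nonneg _) (Real.exp_pos _).le
      linarith [Kernel.add_mul_mul_exp_le hB0 hM0 hμ0 hx0.le]
    · have h3 := (K.γ_le_of_le hr0 hr.2 hxr.le hxδ).trans (hb r ⟨hr0, le_rfl⟩).2.2
      have hpow := Kernel.rpow_le_exp hγ0 h3 (by positivity) (by positivity) hp
      rw [hrate, mul_assoc] at hpow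
      have hfac : |K.γ x + a η * K.dγ x| ≤ K.γ x + A * |K.dγ x| := by
        refine (abs_add_le _ _).trans ?_
        rw [abs_of_nonneg hγ0, abs_mul, abs_of_nonneg ha0]
        linarith [mul_le_mul_of_nonneg_right haA (abs_nonneg (K.dγ x))]
      have hnn : 0 ≤ (B + M / μ) * exp (-μ * x) := by positivity
      linarith [mul_le_mul hpow hfac (abs_nonneg _) (Real.exp_pos _).le]
  have hexp : ∫ x in Ioi (0:ℝ), exp (-μ * x) = 1 / μ := by
    rw [integral_exp_mul_Ioi (by linarith : -μ < 0)]
    simp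
  rw [integral_const_mul, integral_add ((exp_neg_integrableOn_Ioi 0 hμ0).const_mul _)
    (hNint.const_mul _), integral_const_mul, integral_const_mul, hexp, ← hN] at hbound
  have htail := mul_le_mul_of_nonneg_right
    (Kernel.exp_neg_two_mul_le (mul_pos hμ0 hr0)) hN0
  calc _ ≤ K.c η * ((B + M / μ) * (1 / μ) + 1 / (μ * r) ^ 2 * N) :=
        hbound.trans (mul_le_mul_of_nonneg_left (by linarith) hc0)
    _ ≤ 8 * g / η * ((B + M / μ) * (1 / μ) + 1 / (μ * r) ^ 2 * N) :=
        mul_le_mul_of_nonneg_right hc (by positivity)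
    _ = η * (512 / g * (M + N / r ^ 2)) + B * 64 := by
        rw [hμ]; field_simp; ring
    _ ≤ _ := by
        linarith
end

section
/- Weakened maximum principle: for every κ > 0 and T > 0 there exists η_{κ,T} > 0 (depending on κ, T, ‖q₀‖_{L∞}, γ and V) such that for every η ∈ (0, η_{κ,T}) and every nonnegative bounded classical solution q ∈ C^∞ ∩ W^{2,∞}((0,T)×ℝ) of the η-nonlocal conservation law with initial datum q₀ and with ∂_x q(t,·) ∈ L¹(ℝ) for each t, one has ‖q(t,·)‖_{L∞(ℝ)} ≤ (1+κ) ‖q₀‖_{L∞(ℝ)} for all t ∈ (0,T). -/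
open MeasureTheory Real Set Filter Topology

/-! The idea is that the maximum of `q(t,·)` can grow only through the part of the kernel that is away
from the origin, and that this part fades as `η → 0`. At a maximum point `x` the equation reads
`q_t = -V'(W) W_x q`, and with `V' ≤ 0` only a positive `W_x` makes `q` grow. Since
`W_x(x) = ∫ (q(x+z) - q(x)) d(-γ_η)(z)` and `γ_η` decreases on `(0,δ)`, the contribution of `(0,δ)`
is nonpositive; the rest is at most `‖q‖_∞` times the variation of `γ_η` away from the origin. The
latter is controlled by `c_η η⁻¹ γ(δ/2)^{1/η-1}`, which tends to zero because `c_η` is at most of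
order `γ(δ/4)^{-1/η}` and `γ(δ/2) < γ(δ/4)` (`Kernel.exists_tail_le`). So `q` stays below the barrier
`m + κ m t / T` for every `m > M₀`, if `η` is small depending on `κ`, `T`, `M₀`, `γ` and `V`.

Four points need care. The supremum of `q(t,·)` need not be attained, so the argument runs at points
where it is almost attained, with errors controlled by the second-order bounds on `q`
(`abs_le_sqrt_of_expansion`, `barrier`). The kernel is only of bounded variation beyond `δ`, so
`W_x` is replaced by difference quotients of `W`, and the tail is measured by its `L¹` modulus of
translation (`integral_abs_shift_sub_le`, `Wop_sub_le`). The velocity is only locally Lipschitz, so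
the flux may fail to be differentiable; `deriv` is then zero, which is harmless for a one-sided
bound (`flux_deriv_ge`). The value `γ(δ)` is unconstrained, so pointwise bounds on the kernel leave
out `δ`.
-/

/-! ### Translation estimates -/

lemma integrableOn_shift {f : ℝ → ℝ} (hf : IntegrableOn f (Ioi 0)) {h δ : ℝ} (hδ : h ≤ δ) :
    IntegrableOn (fun z => f (z - h)) (Ioi δ) := by
  have h1 : Integrable (fun z => (Ioi (0:ℝ)).indicator f (z - h)) :=
    ((integrable_indicator_iff measurableSet_Ioi).2 hf).comp_sub_right h
  refine h1.integrableOn.congr_fun (fun z hz => ?_) measurableSet_Ioi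
  have : z - h ∈ Ioi (0:ℝ) := by
    simp only [mem_Ioi] at hz ⊢; linarith
  simp [indicator_of_mem this]

/-- A function of bounded variation moves in `L¹` by at most `h` times its variation under a
translation by `h`. -/
lemma integral_abs_shift_sub_le {f : ℝ → ℝ} (hbv : BoundedVariationOn f (Ioi 0))
    (hint : IntegrableOn f (Ioi 0)) {h δ : ℝ} (h0 : 0 < h) (hδ : h < δ) :
    ∫ z in Ioi δ, |f (z - h) - f z| ≤ h * (eVariationOn f (Ioi 0)).toReal := by
  set v : ℝ → ℝ := fun z => (eVariationOn f (Ioc 0 z)).toReal with hv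
  have hfin : ∀ z, eVariationOn f (Ioc 0 z) ≠ ⊤ := fun z => hbv.mono Ioc_subset_Ioi_self
  have hmono : Monotone v := fun a b hab =>
    ENNReal.toReal_mono (hfin b) (eVariationOn.mono _ (Ioc_subset_Ioc_right hab))
  have hv_le : ∀ z, v z ≤ (eVariationOn f (Ioi 0)).toReal := fun z =>
    ENNReal.toReal_mono hbv (eVariationOn.mono _ Ioc_subset_Ioi_self)
  have hv_nn : ∀ z, 0 ≤ v z := fun z => ENNReal.toReal_nonneg
  have key : ∀ a b, 0 < a → a ≤ b → |f a - f b| ≤ v b - v a := by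
    intro a b ha hab
    have h1 : eVariationOn f (Ioc 0 a) + eVariationOn f (Icc a b) ≤ eVariationOn f (Ioc 0 b) := by
      refine (eVariationOn.add_le_union f (fun x hx y hy => hx.2.trans hy.1)).trans
        (eVariationOn.mono _ ?_)
      rintro x (hx | hx)
      · exact ⟨hx.1, hx.2.trans hab⟩
      · exact ⟨ha.trans_le hx.1, hx.2⟩
    have h2 : edist (f a) (f b) ≤ eVariationOn f (Icc a b) :=
      eVariationOn.edist_le f (left_mem_Icc.2 hab) (right_mem_Icc.2 hab)
    have h3 := (add_le_add_right h2 (eVariationOn f (Ioc 0 a))).trans h1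
    have h4 := ENNReal.toReal_mono (hfin b) h3
    rw [ENNReal.toReal_add (hfin a) (edist_ne_top _ _), ← dist_edist, Real.dist_eq] at h4
    simp only [hv]; linarith
  have hI : IntegrableOn (fun z => |f (z - h) - f z|) (Ioi δ) :=
    ((integrableOn_shift hint hδ.le).sub
      (hint.mono_set (Ioi_subset_Ioi (h0.trans hδ).le))).abs
  have hlim := intervalIntegral_tendsto_integral_Ioi δ hI (tendsto_id (α := ℝ) (x := atTop))
  refine le_of_tendsto hlim ?_
  filter_upwards [eventually_ge_atTop δ] with R hR
  have hvi : ∀ a b, IntervalIntegrable v volume a b := fun a b => hmono.intervalIntegrable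
  have hvs : ∀ a b, IntervalIntegrable (fun z => v (z - h)) volume a b := fun a b =>
    (show Monotone (fun z => v (z - h)) from fun x y hxy => hmono (by linarith)).intervalIntegrable
  calc ∫ z in δ..R, |f (z - h) - f z| ≤ ∫ z in δ..R, (v z - v (z - h)) := by
        refine intervalIntegral.integral_mono_on hR ?_ ((hvi _ _).sub (hvs _ _)) ?_
        · rw [intervalIntegrable_iff_integrableOn_Ioc_of_le hR]
          exact hI.mono_set Ioc_subset_Ioi_self
        · intro z hz
          exact key _ _ (by linarith [hz.1]) (by linarith)
    _ = (∫ z in R - h..R, v z) - ∫ z in δ - h..δ, v z := by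
        rw [intervalIntegral.integral_sub (hvi _ _) (hvs _ _),
          intervalIntegral.integral_comp_sub_right (fun z => v z) h,
          intervalIntegral.integral_interval_sub_interval_comm (hvi _ _) (hvi _ _) (hvi _ _),
          intervalIntegral.integral_symm δ, intervalIntegral.integral_symm (R - h) R]
        ring
    _ ≤ (∫ z in R - h..R, (eVariationOn f (Ioi 0)).toReal) - 0 := by
        refine sub_le_sub ?_ ?_
        · exact intervalIntegral.integral_mono_on (by linarith) (hvi _ _)
            intervalIntegrable_const (fun z _ => hv_le z)
        · exact intervalIntegral.integral_nonneg (by linarith) (fun z _ => hv_nn z)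
    _ = _ := by simp

lemma abs_rpow_sub_rpow_le {a b r p : ℝ} (ha : a ∈ Icc 0 r) (hb : b ∈ Icc 0 r) (hp : 1 ≤ p) :
    |a ^ p - b ^ p| ≤ p * r ^ (p - 1) * |a - b| := by
  have := (convex_Icc (0:ℝ) r).norm_image_sub_le_of_norm_hasDerivWithin_le
    (f := fun x : ℝ => x ^ p) (f' := fun x => p * x ^ (p - 1)) (C := p * r ^ (p - 1))
    (fun x _ => (Real.hasDerivAt_rpow_const (Or.inr hp)).hasDerivWithinAt) ?_ hb ha
  · simpa [Real.norm_eq_abs] using this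
  · intro x hx
    rw [Real.norm_eq_abs, abs_of_nonneg (mul_nonneg (by linarith) (Real.rpow_nonneg hx.1 _))]
    exact mul_le_mul_of_nonneg_left (Real.rpow_le_rpow hx.1 hx.2 (by linarith)) (by linarith)

/-! ### The nonlocal operator -/

lemma Wop_eq (g u : ℝ → ℝ) (x : ℝ) :
    Wop g u x = ∫ z, (Ioi (0:ℝ)).indicator g z * u (z + x) := by
  rw [Wop, ← integral_indicator measurableSet_Ioi, ← integral_add_right_eq_self _ x]
  congr 1; ext z
  by_cases hz : 0 < z <;> simp [indicator, hz]

lemma integrable_ind_mul {g u : ℝ → ℝ} (hg : IntegrableOn g (Ioi 0)) (hu : Continuous u) {N : ℝ}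
    (hu0 : ∀ y, 0 ≤ u y) (huN : ∀ y, u y ≤ N) (a b : ℝ) :
    Integrable (fun z => (Ioi (0:ℝ)).indicator g (z - a) * u (z + b)) := by
  refine (((integrable_indicator_iff measurableSet_Ioi).2 hg).comp_sub_right a).mul_bdd (c := N)
    (by fun_prop) (ae_of_all _ fun z => ?_)
  rw [Real.norm_eq_abs, abs_of_nonneg (hu0 _)]; exact huN _

/-- The nonlocal term grows slowly to the right of a point where `u` almost attains its upper
bound `N`: the monotone part of the kernel contributes only through the gap `N - u x`, and the
part of the kernel beyond `δ` through its `L¹` modulus of translation `e h`. -/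
lemma Wop_sub_le {g u : ℝ → ℝ} {δ c e N C h x : ℝ} (hg : IntegrableOn g (Ioi 0))
    (hg0 : ∀ z, 0 < z → 0 ≤ g z) (hanti : AntitoneOn g (Ioo 0 δ))
    (hgc : ∀ z ∈ Ioo 0 δ, g z ≤ c) (h0 : 0 < h) (hδ : h < δ)
    (he : ∫ z in Ioi δ, |g (z - h) - g z| ≤ e * h)
    (hu : Continuous u) (hu0 : ∀ y, 0 ≤ u y) (huN : ∀ y, u y ≤ N)
    (huC : ∀ z, 0 ≤ z → u x - C * z ≤ u (x + z)) (hC : 0 ≤ C) :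
    Wop g u (x + h) - Wop g u x ≤ h * (c * (N - u x + C * h) + N * e) := by
  have hN : 0 ≤ N := (hu0 0).trans (huN 0)
  set G := (Ioi (0:ℝ)).indicator g with hG
  have hGi : Integrable G := (integrable_indicator_iff measurableSet_Ioi).2 hg
  have e1 : Wop g u (x + h) = ∫ z, G (z - h) * u (z + x) := by
    rw [Wop_eq, ← integral_sub_right_eq_self _ h]
    congr 1; ext z; congr 2; ring
  have i1 : Integrable (fun z => G (z - h) * u (z + x)) := integrable_ind_mul hg hu hu0 huN h x
  have i2 : Integrable (fun z => G z * u (z + x)) := by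
    simpa using integrable_ind_mul hg hu hu0 huN 0 x
  rw [e1, Wop_eq, ← integral_sub i1 i2]
  set A : ℝ → ℝ := (Ioc 0 h).indicator (fun z => (N - u x + C * h) * c) with hA
  set B : ℝ → ℝ := (Ici δ).indicator (fun z => N * |g (z - h) - g z|) with hB
  have hAi : Integrable A := (integrable_indicator_iff measurableSet_Ioc).2
    (integrableOn_const (by simp))
  have hBi : Integrable B := by
    refine (integrable_indicator_iff measurableSet_Ici).2 ?_
    rw [integrableOn_Ici_iff_integrableOn_Ioi]
    exact (((integrableOn_shift hg hδ.le).sub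
      (hg.mono_set (Ioi_subset_Ioi (h0.trans hδ).le))).abs).const_mul N
  have hDi : Integrable (fun z => N * (G (z - h) - G z)) :=
    ((hGi.comp_sub_right h).sub hGi).const_mul N
  calc ∫ z, (G (z - h) * u (z + x) - G z * u (z + x))
      ≤ ∫ z, (N * (G (z - h) - G z) + A z + B z) := by
        refine integral_mono (i1.sub i2) ((hDi.add hAi).add hBi) (fun z => ?_)
        simp only
        rcases le_or_gt z 0 with hz | hz
        · simp only [hG, hA, hB, indicator, mem_Ioi, mem_Ioc, mem_Ici]
          rw [if_neg (by linarith), if_neg (by linarith), if_neg (by simp [hz.not_gt]),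
            if_neg (by linarith)]
          simp
        rcases le_or_gt z h with hzh | hzh
        · simp only [hG, hA, hB, indicator, mem_Ioi, mem_Ioc, mem_Ici]
          rw [if_neg (by linarith), if_pos hz, if_pos ⟨hz, hzh⟩, if_neg (by linarith)]
          have h1 := hgc z ⟨hz, by linarith⟩
          have h2 := huC z hz.le
          rw [add_comm x z] at h2
          have h3 := hg0 z hz
          have h4 : C * z ≤ C * h := mul_le_mul_of_nonneg_left hzh hC
          have h5 : 0 ≤ N - u x + C * h := by have := huN x; have := mul_nonneg hC h0.le; linarith
          nlinarith [mul_le_mul_of_nonneg_left h1 h5,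
            mul_le_mul_of_nonneg_left (show N - u (z+x) ≤ N - u x + C * h by linarith) h3]
        · simp only [hG, hA, hB, indicator, mem_Ioi, mem_Ioc, mem_Ici]
          rw [if_pos (by linarith), if_pos hz, if_neg (by simp [hzh])]
          rcases lt_or_ge z δ with hzd | hzd
          · rw [if_neg (by linarith)]
            have := hanti (a := z - h) (b := z) ⟨by linarith, by linarith⟩ ⟨hz, hzd⟩ (by linarith)
            nlinarith [mul_le_mul_of_nonneg_left (huN (z+x)) (sub_nonneg.2 this)]
          · rw [if_pos hzd]
            have h1 := hu0 (z+x)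
            have h2 := huN (z+x)
            have h3 := neg_abs_le (g (z-h) - g z)
            have h4 := abs_nonneg (g (z-h) - g z)
            nlinarith [mul_le_mul_of_nonneg_right (show 0 ≤ N - u (z+x) by linarith) h4]
    _ = (N - u x + C * h) * c * h + N * ∫ z in Ioi δ, |g (z - h) - g z| := by
        have hz : ∫ z, N * (G (z - h) - G z) = 0 := by
          rw [integral_const_mul, integral_sub (hGi.comp_sub_right h) hGi,
            integral_sub_right_eq_self]; simp
        have hDA : Integrable (fun z => N * (G (z - h) - G z) + A z) := hDi.add hAi
        rw [integral_add hDA hBi, integral_add hDi hAi, hz, hA, hB,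
          integral_indicator measurableSet_Ioc, integral_indicator measurableSet_Ici,
          integral_Ici_eq_integral_Ioi, integral_const_mul N]
        simp [h0.le]; ring
    _ ≤ _ := by nlinarith [mul_le_mul_of_nonneg_left he hN]

lemma Wop_nonneg {g u : ℝ → ℝ} (hg0 : ∀ z, 0 < z → 0 ≤ g z) (hu0 : ∀ y, 0 ≤ u y) (x : ℝ) :
    0 ≤ Wop g u x :=
  setIntegral_nonneg measurableSet_Ioi fun y hy =>
    mul_nonneg (hg0 _ (sub_pos.2 hy)) (hu0 y)

lemma Wop_le {g u : ℝ → ℝ} {N : ℝ} (hg : IntegrableOn g (Ioi 0))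
    (hg0 : ∀ z, 0 < z → 0 ≤ g z) (hg1 : ∫ z in Ioi 0, g z = 1) (hu : Continuous u)
    (hu0 : ∀ y, 0 ≤ u y) (huN : ∀ y, u y ≤ N) (x : ℝ) : Wop g u x ≤ N := by
  have i2 : Integrable (fun z => (Ioi (0:ℝ)).indicator g z * u (z + x)) := by
    simpa using integrable_ind_mul hg hu hu0 huN 0 x
  rw [Wop_eq]
  calc _ ≤ ∫ z, (Ioi (0:ℝ)).indicator g z * N :=
        integral_mono i2 (((integrable_indicator_iff measurableSet_Ioi).2 hg).mul_const N)
          fun z => mul_le_mul_of_nonneg_left (huN _) (indicator_nonneg (fun z hz => hg0 z hz) z)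
    _ = N := by rw [integral_mul_const, integral_indicator measurableSet_Ioi, hg1, one_mul]

/-! ### The scaled kernel -/

lemma Kernel.strictAntiOn (K : Kernel) : StrictAntiOn K.γ (Ico 0 K.δ) := by
  refine strictAntiOn_of_deriv_neg (convex_Ico _ _) ?_ ?_
  · intro x hx
    exact ((K.deriv_Ico x hx).continuousWithinAt).mono Ico_subset_Ici_self
  · intro x hx
    rw [interior_Ico] at hx
    have h := (K.deriv_Ico x ⟨hx.1.le, hx.2⟩).hasDerivAt (Ici_mem_nhds hx.1)
    rw [h.deriv]; exact K.dγ_neg x hx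

/-- Beyond `δ / 2` the kernel is dominated by its value there. The point `δ` has to be left out,
as the kernel is unconstrained at it. -/
lemma Kernel.le_half (K : Kernel) {x : ℝ} (hx : K.δ / 2 ≤ x) (hxδ : x ≠ K.δ) :
    K.γ x ≤ K.γ (K.δ / 2) := by
  have := K.δ_pos
  rcases lt_or_gt_of_ne hxδ with h | h
  · exact K.strictAntiOn.antitoneOn ⟨by linarith, by linarith⟩ ⟨by linarith, h⟩ hx
  · exact K.upper _ ⟨by linarith, by linarith⟩ _ h

lemma Kernel.le_one (K : Kernel) {x : ℝ} (hx : 0 ≤ x) (hxδ : x ≠ K.δ) : K.γ x ≤ 1 := by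
  have := K.δ_pos
  rw [← K.γ0]
  have h0 : (0:ℝ) ∈ Ico 0 K.δ := ⟨le_rfl, this⟩
  rcases lt_or_ge x K.δ with h | h
  · exact K.strictAntiOn.antitoneOn h0 ⟨hx, h⟩ hx
  · exact (K.le_half (by linarith) hxδ).trans
      (K.strictAntiOn.antitoneOn h0 ⟨by linarith, by linarith⟩ (by linarith))

lemma Kernel.half_pos (K : Kernel) : 0 < K.γ (K.δ / 2) := by
  have := K.δ_pos
  exact (K.nonneg (3 * K.δ / 4) (by linarith)).trans_lt
    (K.strictAntiOn ⟨by linarith, by linarith⟩ ⟨by linarith, by linarith⟩ (by linarith))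

lemma Kernel.half_lt_quarter (K : Kernel) : K.γ (K.δ / 2) < K.γ (K.δ / 4) := by
  have := K.δ_pos
  exact K.strictAntiOn ⟨by linarith, by linarith⟩ ⟨by linarith, by linarith⟩ (by linarith)

lemma Kernel.integrable_rpow (K : Kernel) {p : ℝ} (hp : 1 ≤ p) :
    IntegrableOn (fun x => K.γ x ^ p) (Ioi 0) := by
  refine Integrable.mono' K.integrable
    (K.integrable.aestronglyMeasurable.aemeasurable.pow_const p).aestronglyMeasurable ?_
  filter_upwards [ae_restrict_mem measurableSet_Ioi,
    ae_restrict_of_ae (volume.ae_ne K.δ)] with x hx hxδ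
  have h0 := K.nonneg x (le_of_lt hx)
  rw [Real.norm_eq_abs, abs_of_nonneg (Real.rpow_nonneg h0 _)]
  calc K.γ x ^ p ≤ K.γ x ^ (1:ℝ) :=
        Real.rpow_le_rpow_of_exponent_ge' h0 (K.le_one (le_of_lt hx) hxδ) zero_le_one hp
    _ = K.γ x := Real.rpow_one _

lemma Kernel.integral_rpow_lower (K : Kernel) {p : ℝ} (hp : 1 ≤ p) :
    K.δ / 4 * K.γ (K.δ / 4) ^ p ≤ ∫ y in Ioi (0:ℝ), K.γ y ^ p := by
  have hδ := K.δ_pos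
  have hs := K.half_pos.trans K.half_lt_quarter
  calc K.δ / 4 * K.γ (K.δ / 4) ^ p = ∫ y in Ioc (0:ℝ) (K.δ / 4), K.γ (K.δ / 4) ^ p := by
        have : 0 ≤ K.δ / 4 := by linarith
        simp [this]
    _ ≤ ∫ y in Ioc (0:ℝ) (K.δ / 4), K.γ y ^ p := by
        refine setIntegral_mono_on (integrableOn_const (by simp))
          ((K.integrable_rpow hp).mono_set Ioc_subset_Ioi_self) measurableSet_Ioc ?_
        intro y hy
        refine Real.rpow_le_rpow hs.le ?_ (by linarith)
        exact K.strictAntiOn.antitoneOn ⟨hy.1.le, by linarith [hy.2]⟩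
          ⟨by linarith, by linarith⟩ hy.2
    _ ≤ _ := setIntegral_mono_set (K.integrable_rpow hp)
        ((ae_restrict_mem measurableSet_Ioi).mono fun y hy =>
          Real.rpow_nonneg (K.nonneg y (le_of_lt hy)) _) Ioc_subset_Ioi_self.eventuallyLE

lemma one_le_one_div_of {η : ℝ} (h0 : 0 < η) (h1 : η < 1) : 1 ≤ 1 / η := by
  rw [le_div_iff₀ h0]; linarith

lemma Kernel.integral_rpow_pos (K : Kernel) {p : ℝ} (hp : 1 ≤ p) :
    0 < ∫ y in Ioi (0:ℝ), K.γ y ^ p := by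
  have hδ := K.δ_pos
  have := Real.rpow_pos_of_pos (K.half_pos.trans K.half_lt_quarter) p
  exact (by positivity : (0:ℝ) < _).trans_le (K.integral_rpow_lower hp)

lemma Kernel.c_pos (K : Kernel) {η : ℝ} (h0 : 0 < η) (h1 : η < 1) : 0 < K.c η :=
  inv_pos.2 (K.integral_rpow_pos (one_le_one_div_of h0 h1))

lemma Kernel.integral_γη (K : Kernel) {η : ℝ} (h0 : 0 < η) (h1 : η < 1) :
    ∫ z in Ioi 0, K.γη η z = 1 := by
  simp only [Kernel.γη]
  rw [integral_const_mul, Kernel.c, inv_mul_cancel₀]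
  exact (K.integral_rpow_pos (one_le_one_div_of h0 h1)).ne'

lemma Kernel.integrable_γη (K : Kernel) {η : ℝ} (h0 : 0 < η) (h1 : η < 1) :
    IntegrableOn (K.γη η) (Ioi 0) :=
  (K.integrable_rpow (one_le_one_div_of h0 h1)).const_mul _

lemma Kernel.γη_nonneg (K : Kernel) {η : ℝ} (h0 : 0 < η) (h1 : η < 1) (z : ℝ) (hz : 0 < z) :
    0 ≤ K.γη η z :=
  mul_nonneg (K.c_pos h0 h1).le (Real.rpow_nonneg (K.nonneg z hz.le) _)

lemma Kernel.γη_antitoneOn (K : Kernel) {η : ℝ} (h0 : 0 < η) (h1 : η < 1) :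
    AntitoneOn (K.γη η) (Ioo 0 K.δ) := fun x hx y hy hxy =>
  mul_le_mul_of_nonneg_left (Real.rpow_le_rpow (K.nonneg y hy.1.le)
    (K.strictAntiOn.antitoneOn ⟨hx.1.le, hx.2⟩ ⟨hy.1.le, hy.2⟩ hxy) (by positivity))
    (K.c_pos h0 h1).le

lemma Kernel.γη_le_c (K : Kernel) {η : ℝ} (h0 : 0 < η) (h1 : η < 1) :
    ∀ z ∈ Ioo 0 K.δ, K.γη η z ≤ K.c η := fun z hz =>
  mul_le_of_le_one_right (K.c_pos h0 h1).le
    (Real.rpow_le_one (K.nonneg z hz.1.le) (K.le_one hz.1.le hz.2.ne) (by positivity))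

/-- A bound for the variation of `γ_η` beyond `δ / 2`, with the null point `δ` disregarded: the total
variation of `γ` times the Lipschitz constant of `a ↦ c_η a^{1/η}` on `[0, γ(δ/2)]`. -/
noncomputable def Kernel.tail (K : Kernel) (η : ℝ) : ℝ :=
  K.c η * (1 / η * K.γ (K.δ / 2) ^ (1 / η - 1)) * (eVariationOn K.γ (Ioi 0)).toReal

lemma Kernel.tail_nonneg (K : Kernel) {η : ℝ} (h0 : 0 < η) (h1 : η < 1) : 0 ≤ K.tail η := by
  have := (K.c_pos h0 h1).le
  have := K.half_pos.le
  unfold Kernel.tail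
  positivity

lemma Kernel.integral_abs_shift_le (K : Kernel) {η h : ℝ} (h0 : 0 < η) (h1 : η < 1) (hh : 0 < h)
    (hhδ : h < K.δ / 2) :
    ∫ z in Ioi K.δ, |K.γη η (z - h) - K.γη η z| ≤ K.tail η * h := by
  have hδ := K.δ_pos
  have hc := (K.c_pos h0 h1).le
  set P := K.c η * (1 / η * K.γ (K.δ / 2) ^ (1 / η - 1)) with hP
  have hsub : Ioi K.δ ⊆ Ioi 0 := Ioi_subset_Ioi hδ.le
  have hhd : h < K.δ := by linarith
  have i1 := (integrableOn_shift (K.integrable_γη h0 h1) hhd.le).sub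
    ((K.integrable_γη h0 h1).mono_set hsub)
  have i2 := (integrableOn_shift K.integrable hhd.le).sub (K.integrable.mono_set hsub)
  have hP0 : 0 ≤ P := by have := K.half_pos.le; positivity
  calc ∫ z in Ioi K.δ, |K.γη η (z - h) - K.γη η z|
      ≤ ∫ z in Ioi K.δ, P * |K.γ (z - h) - K.γ z| := by
        refine integral_mono_ae i1.abs (i2.abs.const_mul P) ?_
        filter_upwards [ae_restrict_mem measurableSet_Ioi,
          ae_restrict_of_ae (volume.ae_ne (K.δ + h))] with z hz hz2
        have hz' : K.δ < z := hz
        have hr := abs_rpow_sub_rpow_le (a := K.γ (z - h)) (b := K.γ z) (r := K.γ (K.δ / 2))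
          ⟨K.nonneg _ (by linarith), K.le_half (by linarith) (fun h => hz2 (by linarith))⟩
          ⟨K.nonneg _ (by linarith), K.le_half (by linarith) hz'.ne'⟩ (one_le_one_div_of h0 h1)
        simp only [Kernel.γη, hP]
        rw [← mul_sub, abs_mul, abs_of_nonneg hc, mul_assoc]
        exact mul_le_mul_of_nonneg_left hr hc
    _ = P * ∫ z in Ioi K.δ, |K.γ (z - h) - K.γ z| := integral_const_mul _ _
    _ ≤ P * (h * (eVariationOn K.γ (Ioi 0)).toReal) :=
        mul_le_mul_of_nonneg_left (integral_abs_shift_sub_le K.bv K.integrable hh hhd) hP0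
    _ = _ := by rw [Kernel.tail]; ring

/-- The variation of `γ_η` away from the origin vanishes as `η → 0`: the normalization `c_η` is at
most of order `γ(δ/4)^{-1/η}`, and `γ(δ/4)` exceeds every value of the kernel beyond `δ/2`. -/
lemma Kernel.exists_tail_le (K : Kernel) {ε : ℝ} (hε : 0 < ε) :
    ∃ ηbar > 0, ηbar ≤ 1 ∧ ∀ η ∈ Ioo 0 ηbar, K.tail η ≤ ε := by
  have hδ := K.δ_pos
  have hr := K.half_pos
  have hrs := K.half_lt_quarter
  set r := K.γ (K.δ / 2) with hr_def
  set s := K.γ (K.δ / 4) with hs_def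
  have hs : 0 < s := hr.trans hrs
  set TV := (eVariationOn K.γ (Ioi 0)).toReal with hTV
  have hTV0 : 0 ≤ TV := ENNReal.toReal_nonneg
  set b := Real.log (s / r) with hb
  have hb0 : 0 < b := Real.log_pos (by rw [lt_div_iff₀ hr]; linarith)
  have hlim : Tendsto (fun p : ℝ => 4 / (K.δ * r) * TV * (p ^ (1:ℝ) * rexp (-b * p))) atTop
      (𝓝 0) := by
    simpa using (tendsto_rpow_mul_exp_neg_mul_atTop_nhds_zero 1 b hb0).const_mul
      (4 / (K.δ * r) * TV)
  obtain ⟨P, hP⟩ := eventually_atTop.1 (hlim.eventually (gt_mem_nhds hε))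
  refine ⟨1 / max P 1, by positivity, ?_, ?_⟩
  · rw [div_le_one (by positivity)]; exact le_max_right _ _
  rintro η ⟨h0, hη⟩
  have hpP : max P 1 < 1 / η := by
    rw [lt_div_iff₀ h0]; rwa [lt_div_iff₀ (by positivity), mul_comm] at hη
  have hp1 : 1 < 1 / η := (le_max_right _ _).trans_lt hpP
  refine le_trans ?_ (hP (1 / η) ((le_max_left _ _).trans hpP.le)).le
  rw [Kernel.tail]
  set p := 1 / η with hp
  have hspos : 0 < s ^ p := Real.rpow_pos_of_pos hs p
  have hc : K.c η ≤ (K.δ / 4 * s ^ p)⁻¹ :=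
    inv_anti₀ (by positivity) (K.integral_rpow_lower hp1.le)
  have hexp : rexp (-b * p) = r ^ p / s ^ p := by
    rw [← Real.div_rpow hr.le hs.le, Real.rpow_def_of_pos (by positivity), hb,
      ← Real.log_inv, inv_div]
  have hrp : r ^ (p - 1) = r ^ p / r := Real.rpow_sub_one hr.ne' p
  rw [hexp, Real.rpow_one, hrp]
  have hrpos : 0 < r ^ p := Real.rpow_pos_of_pos hr p
  have hp0 : 0 < p := by linarith
  calc K.c η * (p * (r ^ p / r)) * TV ≤ (K.δ / 4 * s ^ p)⁻¹ * (p * (r ^ p / r)) * TV := by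
        gcongr
    _ = _ := by field_simp

/-! ### The flux at near-maximal points -/

/-- At a point where `u` almost attains its upper bound `N`, the flux `V(W) u` cannot decrease fast.
Where the flux is not differentiable, `deriv` is zero by convention and the bound still holds. -/
lemma flux_deriv_ge {g u V : ℝ → ℝ} {δ c e N C B ρ L Vm x : ℝ} (hδ : 0 < δ)
    (hg : IntegrableOn g (Ioi 0)) (hg0 : ∀ z, 0 < z → 0 ≤ g z) (hg1 : ∫ z in Ioi 0, g z = 1)
    (hanti : AntitoneOn g (Ioo 0 δ)) (hgc : ∀ z ∈ Ioo 0 δ, g z ≤ c) (hc : 0 ≤ c)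
    (he : ∀ h, 0 < h → h < δ / 2 → ∫ z in Ioi δ, |g (z - h) - g z| ≤ e * h) (he0 : 0 ≤ e)
    (hu : Continuous u) (hu0 : ∀ y, 0 ≤ u y) (huN : ∀ y, u y ≤ N)
    (huC : ∀ z, 0 ≤ z → u x - C * z ≤ u (x + z)) (hC : 0 ≤ C)
    (huρ : ∀ h, 0 < h → |u (x + h) - u x| ≤ ρ * h + B * h ^ 2) (hρ : 0 ≤ ρ)
    (hV : Antitone V) (hL : 0 ≤ L)
    (hVL : ∀ a ∈ Icc 0 N, ∀ b ∈ Icc 0 N, |V a - V b| ≤ L * |a - b|)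
    (hVm : ∀ a ∈ Icc 0 N, |V a| ≤ Vm) :
    -(Vm * ρ + L * N * (c * (N - u x) + N * e)) ≤ deriv (fun z => V (Wop g u z) * u z) x := by
  have hN : 0 ≤ N := (hu0 0).trans (huN 0)
  have hVm0 : 0 ≤ Vm := (abs_nonneg _).trans (hVm 0 ⟨le_rfl, hN⟩)
  have hgap : 0 ≤ N - u x := sub_nonneg.2 (huN x)
  have hW : ∀ y, Wop g u y ∈ Icc 0 N := fun y =>
    ⟨Wop_nonneg hg0 hu0 y, Wop_le hg hg0 hg1 hu hu0 huN y⟩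
  by_cases hd : DifferentiableAt ℝ (fun z => V (Wop g u z) * u z) x
  swap
  · rw [deriv_zero_of_not_differentiableAt hd, neg_nonpos]
    positivity
  have hlim := hd.hasDerivAt.tendsto_slope_zero_right
  have hlow : Tendsto (fun h : ℝ => -(Vm * (ρ + B * h) + L * N * (c * (N - u x + C * h) + N * e)))
      (𝓝[>] 0) (𝓝 (-(Vm * ρ + L * N * (c * (N - u x) + N * e)))) := by
    refine tendsto_nhdsWithin_of_tendsto_nhds ?_
    have : Continuous (fun h : ℝ =>
      -(Vm * (ρ + B * h) + L * N * (c * (N - u x + C * h) + N * e))) := by fun_prop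
    simpa using this.tendsto 0
  refine le_of_tendsto_of_tendsto hlow hlim ?_
  filter_upwards [Ioo_mem_nhdsGT (show (0:ℝ) < δ / 2 by linarith)] with h hh
  obtain ⟨h0, hh2⟩ := hh
  have hdW := Wop_sub_le hg hg0 hanti hgc h0 (by linarith) (he h h0 hh2) hu hu0 huN huC hC
  set Q := c * (N - u x + C * h) + N * e with hQ
  have hQ0 : 0 ≤ Q := by positivity
  set W1 := Wop g u (x + h) with hW1
  set W0 := Wop g u x with hW0
  -- only an increase of the nonlocal term can slow the flow down
  have hVd : -(L * (h * Q)) ≤ V W1 - V W0 := by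
    rcases le_total W1 W0 with hle | hle
    · have := hV hle
      have : 0 ≤ L * (h * Q) := by positivity
      linarith
    · have h1 := hVL W1 (hW _) W0 (hW _)
      rw [abs_of_nonneg (sub_nonneg.2 hle)] at h1
      have h2 := neg_abs_le (V W1 - V W0)
      have h3 := mul_le_mul_of_nonneg_left hdW hL
      linarith
  have h1 : -(Vm * (ρ * h + B * h ^ 2)) ≤ V W1 * (u (x + h) - u x) := by
    have := mul_le_mul (hVm W1 (hW _)) (huρ h h0) (abs_nonneg _) hVm0
    rw [← abs_mul] at this
    linarith [neg_abs_le (V W1 * (u (x + h) - u x))]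
  have h2 : -(L * (h * Q)) * N ≤ (V W1 - V W0) * u x := by
    have h3 : 0 ≤ L * (h * Q) := by positivity
    nlinarith [mul_le_mul_of_nonneg_right hVd (hu0 x), mul_le_mul_of_nonneg_left (huN x) h3]
  rw [smul_eq_mul, ← div_eq_inv_mul, le_div_iff₀ h0]
  nlinarith [h1, h2]

/-- A function bounded above by `N` has a small derivative where it almost attains `N`. -/
lemma abs_le_sqrt_of_expansion {u : ℝ → ℝ} {p B N x : ℝ} (hB : 0 ≤ B)
    (huN : ∀ y, u y ≤ N) (hexp : ∀ h, |u (x + h) - u x - p * h| ≤ B * h ^ 2) :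
    |p| ≤ √(4 * (B + 1) * (N - u x)) := by
  apply Real.abs_le_sqrt
  have h1 := neg_abs_le (u (x + p / (2 * (B + 1))) - u x - p * (p / (2 * (B + 1))))
  have h2 := hexp (p / (2 * (B + 1)))
  have h3 := huN (x + p / (2 * (B + 1)))
  have h4 : p * (p / (2 * (B + 1))) ≤ (N - u x) + B * (p / (2 * (B + 1))) ^ 2 := by linarith
  have hp : p = 2 * (B + 1) * (p / (2 * (B + 1))) := by field_simp
  set k := p / (2 * (B + 1)) with hk
  rw [hp] at h4 ⊢
  nlinarith [sq_nonneg k, mul_nonneg hB (sq_nonneg k), mul_nonneg hB (mul_nonneg hB (sq_nonneg k))]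

/-! ### Barrier argument and regularity -/

/-- A barrier argument without attainment of suprema: a linearly growing bound cannot be crossed
if, whenever it holds at a time, near-maximal points grow at most half as fast as the barrier. -/
lemma barrier {q : ℝ → ℝ → ℝ} {T B m₀ m β : ℝ} (hB : 0 ≤ B) (hm : m₀ < m) (hβ : 0 < β)
    (hlip : ∀ s t x, |q t x - q s x| ≤ B * |t - s|)
    (hexp : ∀ t x h, |q (t + h) x - q t x - deriv (fun s => q s x) t * h| ≤ B * h ^ 2)
    (h0 : ∀ x, q 0 x ≤ m₀)
    (key : ∀ t ∈ Ioo 0 T, (∀ y, q t y ≤ m + β * t) →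
      ∃ ε > 0, ∀ x, m + β * t - ε < q t x → deriv (fun s => q s x) t ≤ β / 2) :
    ∀ t ∈ Ioo 0 T, ∀ x, q t x ≤ m + β * t := by
  by_contra hcon
  push Not at hcon
  obtain ⟨t₁, ht₁, x₁, hx₁⟩ := hcon
  set S : Set ℝ := {t | 0 ≤ t ∧ t < T ∧ ∃ x, m + β * t < q t x} with hS
  have hS1 : t₁ ∈ S := ⟨ht₁.1.le, ht₁.2, x₁, hx₁⟩
  have hbdd : BddBelow S := ⟨0, fun t ht => ht.1⟩
  set τ := sInf S with hτ
  have hτ0 : 0 ≤ τ := le_csInf ⟨_, hS1⟩ fun t ht => ht.1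
  have hτT : τ < T := (csInf_le hbdd hS1).trans_lt ht₁.2
  have hB1 : 0 < B + 1 := by linarith
  have hbefore : ∀ s, 0 ≤ s → s < τ → ∀ x, q s x ≤ m + β * s := by
    intro s hs hsτ x
    by_contra hlt
    exact notMem_of_lt_csInf hsτ hbdd ⟨hs, hsτ.trans hτT, x, not_le.1 hlt⟩
  have hafter : ∀ ε > 0, ∃ x, m + β * τ - ε < q τ x := by
    intro ε hε
    obtain ⟨t, ht, htlt⟩ := exists_lt_of_csInf_lt ⟨_, hS1⟩
      (show sInf S < τ + ε / (B + 1) by rw [← hτ]; linarith [div_pos hε hB1])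
    have hle : τ ≤ t := csInf_le hbdd ht
    obtain ⟨-, -, x, hx⟩ := ht
    refine ⟨x, ?_⟩
    have h1 := (le_abs_self _).trans (hlip τ t x)
    rw [abs_of_nonneg (sub_nonneg.2 hle)] at h1
    have h2 : (B + 1) * (t - τ) < ε := by
      rw [← lt_div_iff₀' hB1]; linarith
    nlinarith [mul_le_mul_of_nonneg_left hle hβ.le]
  have hτpos : 0 < τ := by
    refine lt_of_le_of_ne hτ0 fun h => ?_
    obtain ⟨x, hx⟩ := hafter (m - m₀) (sub_pos.2 hm)
    rw [← h] at hx
    linarith [h0 x]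
  have hat : ∀ y, q τ y ≤ m + β * τ := by
    intro y
    refine le_of_forall_pos_le_add fun ε hε => ?_
    set s := max 0 (τ - ε / (B + 1)) with hs
    have hs0 : 0 ≤ s := le_max_left _ _
    have hsτ : s < τ := max_lt hτpos (by linarith [div_pos hε hB1])
    have h1 := (le_abs_self _).trans (hlip s τ y)
    rw [abs_of_nonneg (sub_nonneg.2 hsτ.le)] at h1
    have h2 : (B + 1) * (τ - s) ≤ ε := by
      rw [← le_div_iff₀' hB1]; linarith [le_max_right 0 (τ - ε / (B + 1))]
    have h3 := hbefore s hs0 hsτ y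
    nlinarith [mul_le_mul_of_nonneg_left hsτ.le hβ.le]
  obtain ⟨ε₀, hε₀, hder⟩ := key τ ⟨hτpos, hτT⟩ hat
  -- stepping back by `k` from a near-maximal point overshoots the barrier at the earlier time
  set k := min (τ / 2) (β / (8 * (B + 1))) with hk
  have hk0 : 0 < k := lt_min (by linarith) (by positivity)
  have hkτ : k < τ := (min_le_left _ _).trans_lt (by linarith)
  have hkβ : 8 * (B + 1) * k ≤ β := by
    rw [← le_div_iff₀' (by positivity)]; exact min_le_right _ _
  obtain ⟨x, hx⟩ := hafter (min ε₀ (β * k / 8)) (lt_min hε₀ (by positivity))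
  have hx1 := hder x (by linarith [min_le_left ε₀ (β * k / 8)])
  have hx2 := min_le_right ε₀ (β * k / 8)
  have h1 := (neg_abs_le _).trans' (neg_le_neg (hexp τ x (-k)))
  have h2 := hbefore (τ + -k) (by linarith) (by linarith) x
  nlinarith [mul_le_mul_of_nonneg_right hx1 hk0.le, mul_le_mul_of_nonneg_right hkβ hk0.le,
    mul_pos hβ hk0, sq_nonneg k]

/-- Uniform Lipschitz bound and second-order expansion of a `W^{2,∞}` function. -/
lemma lip_and_expansion {f : ℝ × ℝ → ℝ} {B : ℝ} (hf : ContDiff ℝ (⊤ : ℕ∞) f)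
    (hB : ∀ i : ℕ, i ≤ 2 → ∀ p, ‖iteratedFDeriv ℝ i f p‖ ≤ B) (p v : ℝ × ℝ) :
    |f (p + v) - f p| ≤ B * ‖v‖ ∧ |f (p + v) - f p - fderiv ℝ f p v| ≤ B * ‖v‖ ^ 2 := by
  have hd : Differentiable ℝ f := hf.differentiable (by simp)
  have hd2 : Differentiable ℝ (fderiv ℝ f) :=
    (hf.fderiv_right (m := 1) (by norm_cast)).differentiable (by simp)
  have hB0 : 0 ≤ B := (norm_nonneg _).trans (hB 0 (by norm_num) 0)
  have h1 : ∀ p, ‖fderiv ℝ f p‖ ≤ B := fun p => by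
    rw [← norm_iteratedFDeriv_one]; exact hB 1 (by norm_num) p
  have h2 : ∀ p, ‖fderiv ℝ (fderiv ℝ f) p‖ ≤ B := fun p => by
    rw [← norm_iteratedFDeriv_one, norm_iteratedFDeriv_fderiv]; exact hB 2 le_rfl p
  have hlip : ∀ p p', ‖fderiv ℝ f p' - fderiv ℝ f p‖ ≤ B * ‖p' - p‖ := fun p p' =>
    convex_univ.norm_image_sub_le_of_norm_fderiv_le (𝕜 := ℝ) (fun x _ => hd2 x)
      (fun x _ => h2 x) (mem_univ _) (mem_univ _)
  constructor
  · have := convex_univ.norm_image_sub_le_of_norm_fderiv_le (𝕜 := ℝ) (fun x _ => hd x)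
      (fun x _ => h1 x) (mem_univ p) (mem_univ (p + v))
    simpa using this
  · have := (convex_closedBall p ‖v‖).norm_image_sub_le_of_norm_fderiv_le' (𝕜 := ℝ)
      (f := f) (φ := fderiv ℝ f p) (C := B * ‖v‖) (x := p) (y := p + v) (fun x _ => hd x)
      (fun x hx => (hlip p x).trans ?_) (by simp) (by simp)
    · simpa [sq, mul_assoc] using this
    · exact mul_le_mul_of_nonneg_left (by simpa [dist_eq_norm] using hx) hB0

/-- Theorem 5.1, weakened maximum principle: for every `κ > 0` and
`T > 0` (and every initial datum `q₀` with `L∞`-bound `M₀`) there exists `η_{κ,T} > 0`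
such that for every `η ∈ (0,η_{κ,T})` and every nonnegative bounded classical solution
`q ∈ C^∞ ∩ W^{2,∞}((0,T)×ℝ)` of the `η`-nonlocal conservation law with initial datum `q₀`
and `∂_x q(t,·) ∈ L¹(ℝ)`, one has `‖q(t,·)‖_{L∞} ≤ (1+κ)‖q₀‖_{L∞}` for all `t ∈ (0,T)`. -/
theorem weakened_maximum_principle (K : Kernel)
    (V : ℝ → ℝ) (hV_lip : LocallyLipschitz V) (hV_anti : Antitone V)
    (κ T : ℝ) (hκ : 0 < κ) (hT : 0 < T)
    (q₀ : ℝ → ℝ) (M₀ : ℝ) (hq₀_nonneg : ∀ x, 0 ≤ q₀ x) (hq₀_bdd : ∀ x, q₀ x ≤ M₀)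
    (hq₀_bv : BoundedVariationOn q₀ Set.univ) :
    ∃ ηbar > (0:ℝ), ∀ η ∈ Set.Ioo (0:ℝ) ηbar, ∀ q : ℝ → ℝ → ℝ, ∀ qB : ℝ,
      ContDiff ℝ (⊤ : ℕ∞) (fun p : ℝ × ℝ => q p.1 p.2) →
      (∀ i : ℕ, i ≤ 2 → ∀ p : ℝ × ℝ,
        ‖iteratedFDeriv ℝ i (fun p : ℝ × ℝ => q p.1 p.2) p‖ ≤ qB) →
      (∀ t x, 0 ≤ q t x) →
      (∀ x, q 0 x = q₀ x) →
      (∀ t, MeasureTheory.Integrable (fun x => deriv (q t) x)) →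
      (∀ t ∈ Set.Ioo 0 T, ∀ x : ℝ,
        deriv (fun s => q s x) t
          + deriv (fun z => V (Wop (K.γη η) (q t) z) * q t z) x = 0) →
      ∀ t ∈ Set.Ioo 0 T, ∀ x : ℝ, q t x ≤ (1 + κ) * M₀ := by
  have hM₀ : 0 ≤ M₀ := (hq₀_nonneg 0).trans (hq₀_bdd 0)
  set R := (1 + κ) * (M₀ + 1) with hR
  have hR0 : 0 < R := by positivity
  obtain ⟨L', hL'⟩ := (hV_lip.locallyLipschitzOn (s := Icc 0 R)).exists_lipschitzOnWith_of_compact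
    isCompact_Icc
  set L : ℝ := NNReal.toReal L' with hL
  have hL0 : 0 ≤ L := L'.2
  have hVL : ∀ a ∈ Icc 0 R, ∀ b ∈ Icc 0 R, |V a - V b| ≤ L * |a - b| := fun a ha b hb => by
    simpa [Real.dist_eq] using hL'.dist_le_mul a ha b hb
  set Vm := max |V R| |V 0| with hVm
  have hVm' : ∀ a ∈ Icc 0 R, |V a| ≤ Vm := fun a ha =>
    abs_le_max_abs_abs (hV_anti ha.2) (hV_anti ha.1)
  obtain ⟨ηbar, hηbar, hηbar1, htail⟩ :=
    K.exists_tail_le (ε := κ / (4 * T * ((L + 1) * R * (1 + κ)))) (by positivity)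
  refine ⟨ηbar, hηbar, ?_⟩
  intro η hη q B hq hqB hq_nonneg hq_init _ hpde t ht x
  have hη0 := hη.1
  have hη1 : η < 1 := hη.2.trans_le hηbar1
  have he := htail η hη
  have he0 := K.tail_nonneg hη0 hη1
  set e := K.tail η with he_def
  have hc := (K.c_pos hη0 hη1).le
  have hB : 0 ≤ B := (norm_nonneg _).trans (hqB 0 (by norm_num) 0)
  set f : ℝ × ℝ → ℝ := fun p => q p.1 p.2 with hf
  have hdf : Differentiable ℝ f := hq.differentiable (by simp)
  have hexp := lip_and_expansion hq hqB
  have hdt : ∀ t x, deriv (fun s => q s x) t = fderiv ℝ f (t, x) (1, 0) := fun t x => by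
    have := (hdf (t, x)).hasFDerivAt.comp_hasDerivAt (x := t) (f := fun s : ℝ => (s, x))
      ((hasDerivAt_id t).prodMk (hasDerivAt_const t x))
    exact this.deriv
  have hlip_t : ∀ s t x, |q t x - q s x| ≤ B * |t - s| := fun s t x => by
    have := (hexp (s, x) (t - s, 0)).1
    simpa [hf, Prod.norm_def] using this
  have hexp_t : ∀ t x h, |q (t + h) x - q t x - deriv (fun s => q s x) t * h| ≤ B * h ^ 2 := by
    intro t x h
    have := (hexp (t, x) (h, 0)).2
    rw [show ((h, 0) : ℝ × ℝ) = h • (1, 0) by simp, map_smul, ← hdt] at this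
    simpa [hf, Prod.norm_def, mul_comm] using this
  have hlip_x : ∀ t x h, |q t (x + h) - q t x| ≤ B * |h| := fun t x h => by
    have := (hexp (t, x) (0, h)).1
    simpa [hf, Prod.norm_def] using this
  have hexp_x : ∀ t x h,
      |q t (x + h) - q t x - fderiv ℝ f (t, x) (0, 1) * h| ≤ B * h ^ 2 := by
    intro t x h
    have := (hexp (t, x) (0, h)).2
    rw [show ((0, h) : ℝ × ℝ) = h • (0, 1) by simp, map_smul] at this
    simpa [hf, Prod.norm_def, mul_comm] using this
  -- it suffices to bound `q` by `(1 + κ) m` for `m` slightly larger than `M₀`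
  suffices hmain : ∀ m, M₀ < m → m ≤ M₀ + 1 → q t x ≤ (1 + κ) * m by
    refine le_of_forall_pos_le_add fun ε hε => ?_
    have hk : 0 < min 1 (ε / (1 + κ)) := lt_min one_pos (by positivity)
    refine (hmain (M₀ + min 1 (ε / (1 + κ))) (by linarith)
      (by linarith [min_le_left 1 (ε / (1 + κ))])).trans ?_
    have h2 := min_le_right 1 (ε / (1 + κ))
    rw [le_div_iff₀' (by positivity)] at h2
    linarith
  intro m hm hm1
  have hm0 : 0 < m := hM₀.trans_lt hm
  have hTm : κ * m / T * T = κ * m := by field_simp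
  set β := κ * m / T with hβ
  have hβ0 : 0 < β := by positivity
  have hN_le : ∀ s ∈ Ioo 0 T, m + β * s ≤ (1 + κ) * m := fun s hs => by
    have := mul_le_mul_of_nonneg_left hs.2.le hβ0.le
    linarith
  refine (barrier hB hm hβ0 hlip_t hexp_t (fun x => hq_init x ▸ hq₀_bdd x) ?_ t ht x).trans
    (hN_le t ht)
  intro s hs hsN
  set N := m + β * s with hN
  have hN0 : 0 < N := by have := mul_pos hβ0 hs.1; linarith
  have hNm : N ≤ (1 + κ) * m := hN_le s hs
  have hNR : N ≤ R := hNm.trans (mul_le_mul_of_nonneg_left hm1 (by positivity))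
  have hsub : Icc 0 N ⊆ Icc 0 R := Icc_subset_Icc_right hNR
  -- the contribution of the kernel's tail is at most half of the allowed growth rate
  have hsmall : L * N * (N * e) ≤ β / 4 := by
    rw [le_div_iff₀ (by positivity)] at he
    rw [hβ, div_div, le_div_iff₀ (by positivity)]
    have h1 : L * N * N ≤ (L + 1) * R * ((1 + κ) * m) := by
      gcongr
      linarith
    calc L * N * (N * e) * (T * 4) = (L * N * N) * (e * (T * 4)) := by ring
      _ ≤ ((L + 1) * R * ((1 + κ) * m)) * (e * (T * 4)) := by
          have := hs.1.trans hs.2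
          gcongr
      _ = (e * (4 * T * ((L + 1) * R * (1 + κ)))) * m := by ring
      _ ≤ κ * m := by gcongr
  have hcont : Continuous (fun ε : ℝ =>
      Vm * √(4 * (B + 1) * ε) + L * N * (K.c η * ε + N * e)) := by fun_prop
  have hev := hcont.continuousAt.eventually_lt (x₀ := 0)
    (continuousAt_const (y := β / 2)) (by simp; linarith)
  obtain ⟨ε₀, hε₀, hε⟩ := Metric.eventually_nhds_iff.1 hev
  refine ⟨ε₀, hε₀, fun y hy => ?_⟩
  have hgap : 0 ≤ N - q s y := sub_nonneg.2 (hsN y)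
  have hlt := hε (y := N - q s y) (by
    rw [Real.dist_eq, sub_zero, abs_of_nonneg hgap]; linarith)
  have hp := abs_le_sqrt_of_expansion hB hsN (hexp_x s y)
  have hcq : Continuous (q s) := by
    have := hdf.continuous
    exact this.comp (by fun_prop : Continuous fun y : ℝ => (s, y))
  have hD := flux_deriv_ge (V := V) (x := y) K.δ_pos (K.integrable_γη hη0 hη1)
    (K.γη_nonneg hη0 hη1) (K.integral_γη hη0 hη1) (K.γη_antitoneOn hη0 hη1) (K.γη_le_c hη0 hη1) hc
    (fun h h0 hh => K.integral_abs_shift_le hη0 hη1 h0 hh) he0 hcq (hq_nonneg s) hsN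
    (fun z hz => by
      have h1 := hlip_x s y z
      rw [abs_of_nonneg hz] at h1
      linarith [neg_abs_le (q s (y + z) - q s y)]) hB
    (ρ := √(4 * (B + 1) * (N - q s y))) (B := B)
    (fun h h0 => by
      have h1 := hexp_x s y h
      have h2 := mul_le_mul_of_nonneg_right hp h0.le
      have h3 := abs_sub_abs_le_abs_sub (q s (y + h) - q s y) (fderiv ℝ f (s, y) (0, 1) * h)
      rw [abs_mul, abs_of_pos h0] at h3
      linarith) (Real.sqrt_nonneg _) hV_anti hL0
    (fun a ha b hb => hVL a (hsub ha) b (hsub hb)) (fun a ha => hVm' a (hsub ha))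
  have := hpde s hs y
  linarith
end

section
/- There exist a constant D₃ > 0 depending only on γ and η̄ ∈ (0, 1/4] such that for every η ∈ (0, η̄) and every bounded C¹ function q : ℝ → ℝ with q' ∈ L¹(ℝ): TV(W[q,γ_η]) ≤ (1/(1−2η) + D₃) · TV(E), where ν := −η/γ'(0), W[q,γ_η](x) := ∫_x^∞ γ_η(y−x) q(y) dy and E(x) := (1/ν) ∫_x^∞ exp((x−y)/ν) q(y) dy. -/
/-!
Writing `p = 1/η`, `g = γ_η` extended by zero to the negative half-line, and `E = Eop ν q`, the
identity `q = E - ν E'` gives `W(x) = ∫ g(z) (E - ν E')(x + z) dz`. Formally, moving the derivative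
onto `g`, `W` is the convolution of `E` with the finite measure `g + ν dg`, so that
`TV(W) ≤ (‖g‖₁ + ν TV(g)) TV(E)`, where the jump of `g` at `0` counts towards `TV(g)`. Since the
constant `D₃` is free, it suffices that `‖g‖₁ = 1 ≤ 1/(1 - 2η)` and that `ν TV(g)` is bounded
uniformly in `η`.

The measure `dg` never appears: `γ` need not be continuous beyond `δ`, and its value at `δ` itself
is not controlled by the dominance hypothesis. Instead `E'` is replaced by a difference quotient of
step `h`, which translation moves onto `g`; then `ν TV(g)` becomes `ν ‖g(· - h) - g‖₁ / h`, and
lower semicontinuity of the variation gives the bound as `h → 0`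
(`eVariationOn_conv_sub_deriv_le`). The `L¹` modulus of continuity `‖g(· - h) - g‖₁` is at most `h`
times the variation of `g` (`lintegral_shift_sub_le`) and ignores the value at the single point `δ`.

For the uniform bound, Bernoulli's inequality applied to `γ(x) ≥ 1 - L x` near zero shows
`∫ γ ^ p ≥ r / p` (`Kernel.exists_mass_bound`), so `ν c_η` is bounded. Before `δ`, `γ ^ p`
decreases with values in `[0, 1]`; beyond `δ`, `γ ≤ m < 1`, so the variation of `γ ^ p` is at most
`p m ^ (p - 1) TV(γ)`, and `p m ^ (p - 1)` is bounded in `p` (`Kernel.mul_rpow_sub_one_le`).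
-/
open MeasureTheory Real Set Filter Topology

/-! ### Variation of convolutions -/

/-- Young's inequality for the total variation. -/
lemma eVariationOn_conv_le {G F : ℝ → ℝ} (hG : Integrable G) (hF : Continuous F)
    {M : ℝ} (hM : ∀ x, |F x| ≤ M) :
    eVariationOn (fun x => ∫ z, G z * F (x + z)) univ ≤
      (∫⁻ z, ‖G z‖ₑ) * eVariationOn F univ := by
  have hint : ∀ x, Integrable (fun z => G z * F (x + z)) := fun x =>
    hG.mul_bdd (c := M) (by fun_prop) (Eventually.of_forall fun z => hM _)
  refine iSup_le ?_
  rintro ⟨n, u, hu, -⟩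
  calc ∑ i ∈ Finset.range n, edist (∫ z, G z * F (u (i + 1) + z)) (∫ z, G z * F (u i + z))
      ≤ ∑ i ∈ Finset.range n, ∫⁻ z, ‖G z‖ₑ * edist (F (u (i + 1) + z)) (F (u i + z)) := by
        refine Finset.sum_le_sum fun i _ => ?_
        rw [edist_eq_enorm_sub, ← integral_sub (hint _) (hint _)]
        refine (enorm_integral_le_lintegral_enorm _).trans (le_of_eq ?_)
        refine lintegral_congr fun z => ?_
        rw [← mul_sub, enorm_mul, edist_eq_enorm_sub]
    _ = ∫⁻ z, ‖G z‖ₑ * ∑ i ∈ Finset.range n, edist (F (u (i + 1) + z)) (F (u i + z)) := by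
        rw [← lintegral_finsetSum']
        · simp_rw [Finset.mul_sum]
        · intro i _
          refine hG.aestronglyMeasurable.enorm.mul (Continuous.aemeasurable ?_)
          fun_prop
    _ ≤ ∫⁻ z, ‖G z‖ₑ * eVariationOn F univ := by
        refine lintegral_mono fun z => ?_
        gcongr
        exact eVariationOn.sum_le (f := F) (u := fun i => u i + z)
          (fun i j hij => by simpa using hu hij) (fun _ => mem_univ _)
    _ = _ := lintegral_mul_const'' _ hG.aestronglyMeasurable.enorm

/-- A half-line is tiled by translates of `Ioc a (a + h)`. -/
lemma lintegral_Ioi_eq_tsum (f : ℝ → ENNReal) (a : ℝ) {h : ℝ} (hh : 0 < h) :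
    ∫⁻ z in Ioi a, f z = ∑' k : ℕ, ∫⁻ z in Ioc a (a + h), f (z + k * h) := by
  have hU : Ioi a = ⋃ k : ℕ, Ioc (a + k * h) (a + k * h + h) := by
    ext z
    simp only [mem_Ioi, mem_iUnion, mem_Ioc]
    constructor
    · intro hz
      have hpos : 0 < (z - a) / h := div_pos (by linarith) hh
      have hc : 0 < ⌈(z - a) / h⌉₊ := Nat.ceil_pos.2 hpos
      refine ⟨⌈(z - a) / h⌉₊ - 1, ?_⟩
      have h1 := Nat.le_ceil ((z - a) / h)
      have h2 := Nat.ceil_lt_add_one hpos.le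
      rw [div_le_iff₀ hh] at h1
      have h3 : (⌈(z - a) / h⌉₊ : ℝ) - 1 < (z - a) / h := by linarith
      rw [lt_div_iff₀ hh] at h3
      push_cast [Nat.cast_sub (Nat.one_le_iff_ne_zero.2 hc.ne')]
      constructor <;> nlinarith
    · rintro ⟨k, hk, -⟩
      have : 0 ≤ (k : ℝ) * h := by positivity
      linarith
  have hd : Pairwise (Function.onFun Disjoint fun k : ℕ => Ioc (a + k * h) (a + k * h + h)) := by
    have h0 := pairwise_disjoint_Ioc_add_zsmul a h
    intro i j hij
    have := h0 (Int.ofNat_injective.ne hij)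
    have e : ∀ k : ℕ, Ioc (a + (Int.ofNat k) • h) (a + (Int.ofNat k + 1) • h) =
        Ioc (a + k * h) (a + k * h + h) := by
      intro k
      congr 1
      · simp [zsmul_eq_mul]
      · simp [zsmul_eq_mul]; ring
    simpa only [Function.onFun, e] using this
  rw [hU, lintegral_iUnion (fun _ => measurableSet_Ioc) hd]
  refine tsum_congr fun k => ?_
  rw [← (measurePreserving_add_right volume ((k : ℝ) * h)).setLIntegral_comp_preimage_emb
    (measurableEmbedding_addRight _) f]
  congr 2
  ext z
  simp only [mem_preimage, mem_Ioc]
  constructor <;> rintro ⟨h1, h2⟩ <;> constructor <;> linarith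

/-- A function vanishing up to `a`, bounded by `B` and of bounded variation beyond `a`, moves
by at most `h` times its total variation in `L¹` under translation by `h`; the jump at `a`
contributes `B`. -/
lemma lintegral_shift_sub_le {g : ℝ → ℝ} {a B h : ℝ} (hg : AEStronglyMeasurable g)
    (h0 : ∀ z ≤ a, g z = 0) (hB : ∀ z, |g z| ≤ B) (hh : 0 < h) :
    ∫⁻ z, ‖g (z - h) - g z‖ₑ ≤
      ENNReal.ofReal h * (ENNReal.ofReal B + eVariationOn g (Ioi a)) := by
  have hmeas : ∀ c : ℝ, AEStronglyMeasurable (fun z => g (z + c)) := fun c =>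
    hg.comp_quasiMeasurePreserving (measurePreserving_add_right volume c).quasiMeasurePreserving
  have hle : ∫⁻ z, ‖g (z - h) - g z‖ₑ ≤ ∫⁻ z in Ioi a, ‖g (z - h) - g z‖ₑ := by
    rw [← lintegral_indicator measurableSet_Ioi]
    refine lintegral_mono fun z => ?_
    by_cases hz : z ∈ Ioi a
    · simp [hz]
    · have hz' : z ≤ a := not_lt.1 hz
      simp [hz, h0 z hz', h0 (z - h) (by linarith)]
  refine hle.trans ?_
  rw [lintegral_Ioi_eq_tsum _ a hh, ← lintegral_tsum]
  · calc ∫⁻ z in Ioc a (a + h), ∑' k : ℕ, ‖g (z + k * h - h) - g (z + k * h)‖ₑ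
        ≤ ∫⁻ z in Ioc a (a + h), (ENNReal.ofReal B + eVariationOn g (Ioi a)) := by
          refine setLIntegral_mono' measurableSet_Ioc fun z hz => ?_
          -- the term `k = 0` straddles `a`, where `g` may jump; the others form a partition sum
          rw [tsum_eq_zero_add' ENNReal.summable]
          gcongr
          · rw [h0 (z + (0 : ℕ) * h - h) (by push_cast; linarith [hz.2]), zero_sub, enorm_neg,
              Real.enorm_eq_ofReal_abs]
            exact ENNReal.ofReal_le_ofReal (hB _)
          · refine ENNReal.tsum_le_of_sum_range_le fun n => ?_
            have := eVariationOn.sum_le (f := g) (s := Ioi a) (n := n)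
              (u := fun i : ℕ => z + i * h) (fun i j hij => by simp only; gcongr)
              (fun i => by
                have : 0 ≤ (i : ℝ) * h := by positivity
                simp only [mem_Ioi]; linarith [hz.1])
            refine le_trans (le_of_eq ?_) this
            refine Finset.sum_congr rfl fun i _ => ?_
            rw [edist_comm, edist_eq_enorm_sub]
            congr 3
            push_cast; ring
      _ = _ := by
          rw [setLIntegral_const, Real.volume_Ioc, mul_comm]
          congr 2; ring
  · intro k
    have := ((hmeas (k * h - h)).sub (hmeas (k * h))).enorm.restrict (s := Ioc a (a + h))
    refine this.congr (Eventually.of_forall fun z => ?_)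
    simp [add_sub_assoc]

lemma eVariationOn_le_of_antitoneOn {g : ℝ → ℝ} {s : Set ℝ} (hg : AntitoneOn g s)
    (h01 : ∀ x ∈ s, g x ∈ Icc (0:ℝ) 1) : eVariationOn g s ≤ 1 := by
  refine iSup_le ?_
  rintro ⟨n, u, hu, us⟩
  have hnn : ∀ i, 0 ≤ g (u i) - g (u (i + 1)) := fun i =>
    sub_nonneg.2 (hg (us _) (us _) (hu (Nat.le_succ i)))
  have : ∀ i, edist (g (u (i + 1))) (g (u i)) = ENNReal.ofReal (g (u i) - g (u (i + 1))) := by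
    intro i
    rw [edist_comm, edist_dist, Real.dist_eq, abs_of_nonneg (hnn i)]
  simp only [this]
  rw [← ENNReal.ofReal_sum_of_nonneg fun i _ => hnn i, Finset.sum_range_sub' (fun i => g (u i))]
  rw [ENNReal.ofReal_le_one]
  linarith [(h01 _ (us 0)).2, (h01 _ (us n)).1]

/-- Rigorous form of `TV(g * (E - ν E')) ≤ (‖g‖₁ + ν TV(g)) TV(E)`, with `V` in the role of
`TV(g)` entering only through the `L¹` modulus of continuity of `g`. -/
lemma eVariationOn_conv_sub_deriv_le {g E E' : ℝ → ℝ} {ν M M' : ℝ} {V : ENNReal}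
    (hg : Integrable g) (hν : 0 ≤ ν)
    (hV : ∀ h > 0, ∫⁻ z, ‖g (z - h) - g z‖ₑ ≤ ENNReal.ofReal h * V)
    (hE : ∀ x, HasDerivAt E (E' x) x) (hM : ∀ x, |E x| ≤ M) (hM' : ∀ x, |E' x| ≤ M') :
    eVariationOn (fun x => ∫ z, g z * (E (x + z) - ν * E' (x + z))) univ ≤
      ((∫⁻ z, ‖g z‖ₑ) + ENNReal.ofReal ν * V) * eVariationOn E univ := by
  have hEc : Continuous E := continuous_iff_continuousAt.2 fun x => (hE x).continuousAt
  have hlip : ∀ x y, |E y - E x| ≤ M' * |y - x| := fun x y => by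
    simpa using! convex_univ.norm_image_sub_le_of_norm_hasDerivWithin_le (f := E) (f' := E')
      (fun x _ => (hE x).hasDerivWithinAt) (fun x _ => hM' x) (mem_univ x) (mem_univ y)
  -- replacing `E'` by a forward difference quotient lets the quotient be moved onto `g`
  let D : ℕ → ℝ := fun n => 1 / ((n : ℝ) + 1)
  have hD : ∀ n, 0 < D n := fun n => by positivity
  have hD0 : Tendsto D atTop (𝓝 0) := tendsto_one_div_add_atTop_nhds_zero_nat
  let A : ℕ → ℝ → ℝ := fun n x =>
    ∫ z, g z * (E (x + z) - ν * ((E (x + z + D n) - E (x + z)) / D n))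
  have hA : ∀ x, Tendsto (fun n => A n x) atTop
      (𝓝 (∫ z, g z * (E (x + z) - ν * E' (x + z)))) := by
    intro x
    refine tendsto_integral_of_dominated_convergence (fun z => |g z| * (M + ν * M')) ?_ ?_ ?_ ?_
    · intro n
      refine hg.aestronglyMeasurable.mul (Continuous.aestronglyMeasurable ?_)
      fun_prop
    · exact hg.abs.mul_const _
    · intro n
      refine Eventually.of_forall fun z => ?_
      rw [norm_mul, Real.norm_eq_abs, Real.norm_eq_abs]
      gcongr
      refine (abs_sub _ _).trans ?_
      rw [abs_mul, abs_of_nonneg hν, abs_div, abs_of_pos (hD n)]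
      gcongr
      · exact hM _
      · rw [div_le_iff₀ (hD n)]
        refine (hlip _ _).trans (le_of_eq ?_)
        rw [add_sub_cancel_left, abs_of_pos (hD n)]
    · refine Eventually.of_forall fun z => ?_
      refine Tendsto.const_mul _ (Tendsto.const_sub _ (Tendsto.const_mul _ ?_))
      have h1 := (hE (x + z)).tendsto_slope_zero_right
      have h2 : Tendsto D atTop (𝓝[>] 0) := tendsto_nhdsWithin_iff.2
        ⟨hD0, Eventually.of_forall hD⟩
      refine (h1.comp h2).congr fun n => ?_
      simp [div_eq_inv_mul]
  have hAle : ∀ n, eVariationOn (A n) univ ≤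
      ((∫⁻ z, ‖g z‖ₑ) + ENNReal.ofReal ν * V) * eVariationOn E univ := by
    intro n
    have hgs : Integrable fun z => g (z - D n) := hg.comp_sub_right _
    let G : ℝ → ℝ := fun z => g z - ν / D n * (g (z - D n) - g z)
    have hG : Integrable G := hg.sub ((hgs.sub hg).const_mul _)
    have hAG : A n = fun x => ∫ z, G z * E (x + z) := by
      funext x
      have hb : ∀ {f : ℝ → ℝ} (c : ℝ), Integrable f → Integrable fun z => f z * E (x + z + c) :=
        fun c hf => hf.mul_bdd (c := M) (by fun_prop) (Eventually.of_forall fun z => hM _)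
      have hb0 : ∀ {f : ℝ → ℝ}, Integrable f → Integrable fun z => f z * E (x + z) :=
        fun hf => by simpa using hb 0 hf
      have hsh : ∫ z, g z * E (x + z + D n) = ∫ z, g (z - D n) * E (x + z) := by
        rw [← integral_sub_right_eq_self (fun z => g z * E (x + z + D n)) (D n)]
        refine integral_congr_ae (Eventually.of_forall fun z => ?_)
        simp only
        congr 2; ring
      calc A n x = ∫ z, ((1 + ν / D n) * (g z * E (x + z)) -
            ν / D n * (g z * E (x + z + D n))) := by
            refine integral_congr_ae (Eventually.of_forall fun z => ?_)
            simp only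
            ring
        _ = (1 + ν / D n) * (∫ z, g z * E (x + z)) -
            ν / D n * ∫ z, g (z - D n) * E (x + z) := by
            rw [integral_sub ((hb0 hg).const_mul _) ((hb _ hg).const_mul _),
              integral_const_mul, integral_const_mul, hsh]
        _ = ∫ z, G z * E (x + z) := by
            rw [← integral_const_mul, ← integral_const_mul,
              ← integral_sub ((hb0 hg).const_mul _) ((hb0 hgs).const_mul _)]
            refine integral_congr_ae (Eventually.of_forall fun z => ?_)
            simp only [G]
            ring
    rw [hAG]
    refine (eVariationOn_conv_le hG hEc hM).trans ?_
    gcongr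
    calc ∫⁻ z, ‖G z‖ₑ
        ≤ ∫⁻ z, (‖g z‖ₑ + ENNReal.ofReal (ν / D n) * ‖g (z - D n) - g z‖ₑ) := by
          refine lintegral_mono fun z => ?_
          refine (enorm_sub_le).trans ?_
          rw [enorm_mul, Real.enorm_of_nonneg (div_nonneg hν (hD n).le)]
      _ = (∫⁻ z, ‖g z‖ₑ) + ENNReal.ofReal (ν / D n) * ∫⁻ z, ‖g (z - D n) - g z‖ₑ := by
          rw [lintegral_add_left' hg.aestronglyMeasurable.enorm,
            lintegral_const_mul' _ _ ENNReal.ofReal_ne_top]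
      _ ≤ (∫⁻ z, ‖g z‖ₑ) + ENNReal.ofReal (ν / D n) * (ENNReal.ofReal (D n) * V) := by
          gcongr
          exact hV _ (hD n)
      _ = _ := by
          rw [← mul_assoc, ← ENNReal.ofReal_mul (div_nonneg hν (hD n).le),
            div_mul_cancel₀ _ (hD n).ne']
  refine le_of_forall_lt fun v hv => ?_
  obtain ⟨n, hn⟩ := (eVariationOn.lowerSemicontinuous_aux (fun x _ => hA x) hv).exists
  exact hn.trans_le (hAle n)

/-! ### The exponential surrogate -/

/-- `E = Eop ν q` solves `ν E' = E - q` and inherits the bound of `q`. -/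
lemma Eop_prop {ν : ℝ} (hν : 0 < ν) {q : ℝ → ℝ} (hq : Continuous q) {M : ℝ}
    (hM : ∀ x, |q x| ≤ M) :
    (∀ x, HasDerivAt (Eop ν q) ((Eop ν q x - q x) / ν) x) ∧ ∀ x, |Eop ν q x| ≤ M := by
  let f : ℝ → ℝ := fun y => rexp (-ν⁻¹ * y) * q y
  have hfc : Continuous f := by fun_prop
  have hneg : -ν⁻¹ < 0 := by simpa using hν
  have hf : ∀ a, IntegrableOn f (Ioi a) := fun a =>
    (integrableOn_exp_mul_Ioi hneg a).mul_bdd (c := M) hq.aestronglyMeasurable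
      (Eventually.of_forall hM)
  have hEf : ∀ x, Eop ν q x = ν⁻¹ * (rexp (ν⁻¹ * x) * ∫ y in Ioi x, f y) := by
    intro x
    rw [Eop, one_div, ← integral_const_mul (rexp (ν⁻¹ * x))]
    congr 2
    funext y
    rw [← mul_assoc, ← Real.exp_add]
    congr 2
    field_simp
    ring
  have hI : ∀ x, HasDerivAt (fun x => ∫ y in Ioi x, f y) (-f x) x := by
    intro x
    have h1 : (fun x => ∫ y in Ioi x, f y) = fun x => (∫ y in Ioi 0, f y) - ∫ y in (0:ℝ)..x, f y := by
      funext t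
      rw [← intervalIntegral.integral_Ioi_sub_Ioi' (hf 0) (hf t)]
      ring
    rw [h1]
    exact (intervalIntegral.integral_hasDerivAt_right (hfc.intervalIntegrable _ _)
      (hfc.stronglyMeasurableAtFilter _ _) hfc.continuousAt).const_sub _
  constructor
  · intro x
    rw [show Eop ν q = fun x => ν⁻¹ * (rexp (ν⁻¹ * x) * ∫ y in Ioi x, f y) from funext hEf]
    have he : HasDerivAt (fun x => rexp (ν⁻¹ * x)) (rexp (ν⁻¹ * x) * (ν⁻¹ * 1)) x :=
      ((hasDerivAt_id x).const_mul _).exp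
    refine ((he.mul (hI x)).const_mul ν⁻¹).congr_deriv ?_
    have hx : rexp (ν⁻¹ * x) * rexp (-ν⁻¹ * x) = 1 := by
      rw [← Real.exp_add]; simp
    simp only [f]
    field_simp at hx ⊢
    linear_combination (-ν * q x) * hx
  · intro x
    have hb : |∫ y in Ioi x, f y| ≤ ∫ y in Ioi x, rexp (-ν⁻¹ * y) * M := by
      rw [← Real.norm_eq_abs]
      refine norm_integral_le_of_norm_le ((integrableOn_exp_mul_Ioi hneg x).mul_const _)
        (Eventually.of_forall fun y => ?_)
      rw [norm_mul, Real.norm_of_nonneg (Real.exp_pos _).le]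
      gcongr
      exact hM y
    rw [integral_mul_const, integral_exp_mul_Ioi hneg] at hb
    rw [hEf, abs_mul, abs_mul, abs_of_pos (Real.exp_pos _), abs_of_pos (inv_pos.2 hν)]
    calc ν⁻¹ * (rexp (ν⁻¹ * x) * |∫ y in Ioi x, f y|)
        ≤ ν⁻¹ * (rexp (ν⁻¹ * x) * (-rexp (-ν⁻¹ * x) / -ν⁻¹ * M)) := by gcongr
      _ = (rexp (ν⁻¹ * x) * rexp (-ν⁻¹ * x)) * M := by field_simp
      _ = M := by rw [← Real.exp_add]; simp

/-! ### Properties of the kernel -/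

namespace Kernel

lemma strictAntiOn_s13 (K : Kernel) : StrictAntiOn K.γ (Ico 0 K.δ) := by
  have hd : ∀ x ∈ Ioo 0 K.δ, HasDerivAt K.γ (K.dγ x) x := fun x hx =>
    (K.deriv_Ico x ⟨hx.1.le, hx.2⟩).hasDerivAt (Ici_mem_nhds hx.1)
  refine strictAntiOn_of_deriv_neg (convex_Ico _ _) ?_ ?_
  · intro x hx
    exact (K.deriv_Ico x hx).continuousWithinAt.mono fun y hy => hy.1
  · intro x hx
    rw [interior_Ico] at hx
    rw [(hd x hx).deriv]
    exact K.dγ_neg x hx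

lemma le_one_s13 (K : Kernel) {x : ℝ} (hx : x ∈ Ico 0 K.δ) : K.γ x ≤ 1 := by
  rw [← K.γ0]
  exact K.strictAntiOn_s13.antitoneOn ⟨le_rfl, K.δ_pos⟩ hx hx.1

lemma exists_tail_bound (K : Kernel) :
    ∃ m, 0 < m ∧ m < 1 ∧ ∀ y, K.δ < y → K.γ y ≤ m := by
  have h := K.δ_pos
  refine ⟨K.γ (K.δ / 2), ?_, ?_, fun y hy => K.upper _ ⟨by linarith, by linarith⟩ y hy⟩
  · exact (K.nonneg (3 * K.δ / 4) (by linarith)).trans_lt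
      (K.strictAntiOn_s13 ⟨by linarith, by linarith⟩ ⟨by linarith, by linarith⟩ (by linarith))
  · rw [← K.γ0]
    exact K.strictAntiOn_s13 ⟨le_rfl, h⟩ ⟨by linarith, by linarith⟩ (by linarith)

/-- The exceptional point is `δ`, where no bound on `γ` is available. -/
lemma ae_le_one (K : Kernel) : ∀ᵐ x ∂(volume.restrict (Ioi (0:ℝ))), K.γ x ≤ 1 := by
  obtain ⟨m, -, hm1, hm⟩ := K.exists_tail_bound
  rw [ae_restrict_iff' measurableSet_Ioi]
  filter_upwards [compl_mem_ae_iff.2 (measure_singleton (μ := volume) K.δ)] with x hx hx0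
  rcases lt_or_gt_of_ne (show x ≠ K.δ from hx) with h | h
  · exact K.le_one_s13 ⟨le_of_lt hx0, h⟩
  · exact (hm x h).trans hm1.le

/-- The mass of `γ ^ p` decays no faster than `1 / p`, because `γ` leaves the value `1` at zero
at most linearly. -/
lemma exists_mass_bound (K : Kernel) :
    ∃ r > 0, ∀ p : ℝ, 1 ≤ p → r / p ≤ ∫ x in Ioi (0:ℝ), K.γ x ^ p := by
  obtain ⟨L, hL, hO⟩ := (K.deriv_Ico 0 ⟨le_rfl, K.δ_pos⟩).hasFDerivWithinAt.isBigO_sub.exists_pos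
  obtain ⟨ε, hε, hball⟩ := Metric.mem_nhdsWithin_iff.1 hO.bound
  have hlow : ∀ x, 0 ≤ x → x < ε → 1 - L * x ≤ K.γ x := by
    intro x hx hxε
    have := hball ⟨by simpa [abs_of_nonneg hx] using hxε, hx⟩
    simp only [mem_ofPred_eq, K.γ0, sub_zero, Real.norm_eq_abs, abs_of_nonneg hx] at this
    linarith [(abs_le.1 this).1]
  -- on `(0, s / p]` one has `L x ≤ 1 / (2 p)`, so Bernoulli gives `γ x ^ p ≥ 1 / 2`
  set s := min (ε / 2) (1 / (2 * L)) with hs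
  have hs0 : 0 < s := by positivity
  refine ⟨s / 2, by positivity, fun p hp => ?_⟩
  have hp0 : 0 < p := by linarith
  have hpt : ∀ x ∈ Ioc 0 (s / p), 1 / 2 ≤ K.γ x ^ p := by
    intro x hx
    have hxs : x ≤ s := hx.2.trans (div_le_self hs0.le hp)
    have h1 : L * x ≤ 1 / (2 * p) := by
      have : x ≤ 1 / (2 * L) / p := hx.2.trans (by gcongr; exact min_le_right _ _)
      calc L * x ≤ L * (1 / (2 * L) / p) := by gcongr
        _ = 1 / (2 * p) := by field_simp
    have h2 : 1 / (2 * p) ≤ 1 / 2 := by gcongr; linarith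
    have h3 : 1 + -(1 / (2 * p)) ≤ K.γ x := by
      have := hlow x hx.1.le (by have := min_le_left (ε / 2) (1 / (2 * L)); linarith)
      linarith
    calc (1:ℝ) / 2 = 1 + p * -(1 / (2 * p)) := by field_simp; norm_num
      _ ≤ (1 + -(1 / (2 * p))) ^ p := one_add_mul_self_le_rpow_one_add (by linarith) hp
      _ ≤ K.γ x ^ p := Real.rpow_le_rpow (by linarith) h3 hp0.le
  have hint := K.integrableOn_rpow hp
  calc s / 2 / p = ∫ x in Ioc 0 (s / p), (1 / 2 : ℝ) := by
        simp [(div_pos hs0 hp0).le]; ring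
    _ ≤ ∫ x in Ioc 0 (s / p), K.γ x ^ p :=
        setIntegral_mono_on (by simp) (hint.mono_set Ioc_subset_Ioi_self) measurableSet_Ioc hpt
    _ ≤ ∫ x in Ioi (0:ℝ), K.γ x ^ p := by
        refine setIntegral_mono_set hint ?_ (LE.le.eventuallyLE Ioc_subset_Ioi_self)
        filter_upwards [ae_restrict_mem measurableSet_Ioi] with x hx0
        exact Real.rpow_nonneg (K.nonneg x (le_of_lt hx0)) _

/-- Geometric decay beats linear growth, with a bound from Bernoulli's inequality. -/
lemma mul_rpow_sub_one_le {m : ℝ} (h0 : 0 < m) (h1 : m < 1) :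
    ∃ C > 0, ∀ p : ℝ, 2 ≤ p → p * m ^ (p - 1) ≤ C := by
  have hs : 0 < 1 / m - 1 := sub_pos.2 (one_lt_one_div h0 h1)
  set s := min 1 (1 / m - 1) with hsd
  have hs0 : 0 < s := lt_min one_pos hs
  refine ⟨1 / s, by positivity, fun p hp => ?_⟩
  have hb := one_add_mul_self_le_rpow_one_add (s := 1 / m - 1) (by linarith)
    (p := p - 1) (by linarith)
  have h2 : s * p ≤ 1 + (p - 1) * (1 / m - 1) := by
    have := min_le_left 1 (1 / m - 1)
    have := min_le_right 1 (1 / m - 1)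
    nlinarith
  rw [show 1 + (1 / m - 1) = m⁻¹ by rw [one_div]; ring, Real.inv_rpow h0.le] at hb
  have hmp : 0 < m ^ (p - 1) := Real.rpow_pos_of_pos h0 _
  rw [le_div_iff₀ hs0]
  have := mul_le_mul_of_nonneg_right (h2.trans hb) hmp.le
  rw [inv_mul_cancel₀ hmp.ne'] at this
  linarith

/-! ### Translates of powers of the kernel -/

/-- The part of `γ ^ p` on `(0, δ)`, extended by zero to the line. The point `δ` is left out of both
`headPow` and `tailPow`, since `γ δ` may exceed `1`, in which case `γ δ ^ p` is unbounded in `p`. -/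
noncomputable def headPow (K : Kernel) (p : ℝ) : ℝ → ℝ :=
  indicator (Ioo 0 K.δ) fun x => K.γ x ^ p

/-- The part of `γ ^ p` on `(δ, ∞)`, extended by zero to the line. -/
noncomputable def tailPow (K : Kernel) (p : ℝ) : ℝ → ℝ :=
  indicator (Ioi K.δ) fun x => K.γ x ^ p

lemma integrable_headPow (K : Kernel) {p : ℝ} (hp : 1 ≤ p) : Integrable (K.headPow p) :=
  ((K.integrableOn_rpow hp).mono_set fun _ h => h.1).integrable_indicator measurableSet_Ioo

lemma integrable_tailPow (K : Kernel) {p : ℝ} (hp : 1 ≤ p) : Integrable (K.tailPow p) :=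
  ((K.integrableOn_rpow hp).mono_set (Ioi_subset_Ioi K.δ_pos.le)).integrable_indicator
    measurableSet_Ioi

lemma ae_head_add_tail (K : Kernel) (p : ℝ) :
    (fun z => K.headPow p z + K.tailPow p z) =ᵐ[volume]
      indicator (Ioi 0) fun x => K.γ x ^ p := by
  have := K.δ_pos
  filter_upwards [compl_mem_ae_iff.2 (measure_singleton (μ := volume) K.δ)] with x hx
  have hx : x ≠ K.δ := hx
  simp only [headPow, tailPow, indicator_apply, mem_Ioo, mem_Ioi]
  grind

lemma lintegral_shift_head_le (K : Kernel) {p h : ℝ} (hp : 1 ≤ p) (hh : 0 < h) :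
    ∫⁻ z, ‖K.headPow p (z - h) - K.headPow p z‖ₑ ≤ ENNReal.ofReal h * 2 := by
  have h01 : ∀ x, K.headPow p x ∈ Icc (0:ℝ) 1 := by
    intro x
    rw [headPow, indicator_apply]
    split_ifs with hx
    · exact ⟨Real.rpow_nonneg (K.nonneg x hx.1.le) _,
        Real.rpow_le_one (K.nonneg x hx.1.le) (K.le_one_s13 ⟨hx.1.le, hx.2⟩) (by linarith)⟩
    · simp
  refine (lintegral_shift_sub_le (a := 0) (B := 1)
    (K.integrable_headPow hp).aestronglyMeasurable ?_ ?_ hh).trans ?_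
  · intro z hz
    exact indicator_of_notMem (fun h => absurd h.1 (not_lt.2 hz)) _
  · intro z
    rw [abs_of_nonneg (h01 z).1]
    exact (h01 z).2
  · have : eVariationOn (K.headPow p) (Ioi 0) ≤ 1 := by
      refine eVariationOn_le_of_antitoneOn ?_ fun x _ => h01 x
      intro x hx y hy hxy
      by_cases hyd : y < K.δ
      · have hx' : x ∈ Ioo 0 K.δ := ⟨hx, hxy.trans_lt hyd⟩
        have hy' : y ∈ Ioo 0 K.δ := ⟨hy, hyd⟩
        rw [headPow, indicator_of_mem hx', indicator_of_mem hy']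
        exact Real.rpow_le_rpow (K.nonneg y hy'.1.le)
          (K.strictAntiOn_s13.antitoneOn ⟨hx'.1.le, hx'.2⟩ ⟨hy'.1.le, hy'.2⟩ hxy) (by linarith)
      · rw [show K.headPow p y = 0 from indicator_of_notMem (fun h => hyd h.2) _]
        exact (h01 x).1
    gcongr
    rw [ENNReal.ofReal_one, ← one_add_one_eq_two]
    gcongr

lemma lintegral_shift_tail_le (K : Kernel) {p h m : ℝ} {C : NNReal} (hp : 1 ≤ p) (hh : 0 < h)
    (hm1 : m < 1) (hm : ∀ y, K.δ < y → K.γ y ≤ m) (hC : p * m ^ (p - 1) ≤ C) :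
    ∫⁻ z, ‖K.tailPow p (z - h) - K.tailPow p z‖ₑ ≤
      ENNReal.ofReal h * (1 + C * eVariationOn K.γ (Ioi 0)) := by
  have hd := K.δ_pos
  refine (lintegral_shift_sub_le (a := K.δ) (B := 1)
    (K.integrable_tailPow hp).aestronglyMeasurable ?_ ?_ hh).trans ?_
  · intro z hz
    exact indicator_of_notMem (not_lt.2 hz) _
  · intro z
    rw [tailPow, indicator_apply]
    split_ifs with hz
    · have h0 := K.nonneg z (hd.trans hz).le
      rw [abs_of_nonneg (Real.rpow_nonneg h0 _)]
      exact Real.rpow_le_one h0 ((hm z hz).trans hm1.le) (by linarith)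
    · simp
  · -- `t ↦ t ^ p` is Lipschitz on the range `[0, m]` of the tail
    have hlip : LipschitzOnWith C (fun t : ℝ => t ^ p) (Icc 0 m) := by
      refine (convex_Icc _ _).lipschitzOnWith_of_nnnorm_hasDerivWithin_le
        (fun t _ => (Real.hasDerivAt_rpow_const (Or.inr hp)).hasDerivWithinAt) ?_
      intro t ht
      rw [← NNReal.coe_le_coe, coe_nnnorm, Real.norm_of_nonneg
        (mul_nonneg (by linarith) (Real.rpow_nonneg ht.1 _))]
      refine le_trans ?_ hC
      exact mul_le_mul_of_nonneg_left (Real.rpow_le_rpow ht.1 ht.2 (by linarith)) (by linarith)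
    have h1 : eVariationOn (K.tailPow p) (Ioi K.δ) ≤ C * eVariationOn K.γ (Ioi 0) := by
      rw [eVariationOn.congr (f := K.tailPow p) (g := (fun t : ℝ => t ^ p) ∘ K.γ)
        fun x hx => indicator_of_mem hx _]
      refine (hlip.comp_eVariationOn_le
        fun x hx => ⟨K.nonneg x (hd.trans hx).le, hm x hx⟩).trans ?_
      gcongr
      exact eVariationOn.mono _ (Ioi_subset_Ioi hd.le)
    rw [ENNReal.ofReal_one]
    gcongr

end Kernel

/-! ### Comparison of the total variations -/

/-- there exist `D₃ > 0` depending only on `γ` and `η̄ ∈ (0,1/4]` such that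
for every `η ∈ (0,η̄)` and every bounded `C¹` function `q : ℝ → ℝ` with `q' ∈ L¹(ℝ)`:
`TV(W[q,γ_η]) ≤ (1/(1-2η) + D₃)·TV(E)`, where `ν = -η/γ'(0)`,
`W[q,γ_η](x) = ∫_x^∞ γ_η(y-x) q(y) dy` and `E(x) = (1/ν)∫_x^∞ e^{(x-y)/ν} q(y) dy`. -/
theorem W_TV_bounded_by_E_TV (K : Kernel) (hK : K.AC) :
    ∃ D₃ > (0:ℝ), ∃ ηbar ∈ Set.Ioc (0:ℝ) (1/4), ∀ η ∈ Set.Ioo (0:ℝ) ηbar,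
      ∀ q q' : ℝ → ℝ, (∀ x, HasDerivAt q (q' x) x) → (∃ M, ∀ x, |q x| ≤ M) →
        MeasureTheory.Integrable q' →
        eVariationOn (Wop (K.γη η) q) Set.univ ≤
          ENNReal.ofReal (1/(1 - 2*η) + D₃) *
            eVariationOn (Eop (-η / K.dγ 0) q) Set.univ := by
  obtain ⟨r, hr, hmass⟩ := K.exists_mass_bound
  obtain ⟨m, hm0, hm1, hm⟩ := K.exists_tail_bound
  obtain ⟨C, hC, hCp⟩ := Kernel.mul_rpow_sub_one_le hm0 hm1
  lift C to NNReal using hC.le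
  have ha : 0 < -K.dγ 0 := neg_pos.2 K.dγ0_neg
  have hT : eVariationOn K.γ (Ioi 0) ≠ ⊤ := K.bv
  set T : ℝ := (eVariationOn K.γ (Ioi 0)).toReal with hTd
  have hT0 : 0 ≤ T := ENNReal.toReal_nonneg
  refine ⟨1 / (-K.dγ 0 * r) * (3 + C * T), by positivity, 1 / 4, by norm_num, ?_⟩
  rintro η ⟨hη, hη4⟩ q q' hq ⟨M, hM⟩ -
  have hp : 2 ≤ 1 / η := by rw [le_div_iff₀ hη]; linarith
  have hp1 : 1 ≤ 1 / η := by linarith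
  set p := 1 / η with hpd
  set ν := -η / K.dγ 0 with hνd
  have hν' : ν = η / -K.dγ 0 := by rw [hνd, div_neg, neg_div]
  have hν : 0 < ν := hν' ▸ div_pos hη ha
  have hqc : Continuous q := continuous_iff_continuousAt.2 fun x => (hq x).continuousAt
  have hIpos : 0 < ∫ x in Ioi (0:ℝ), K.γ x ^ p :=
    (div_pos hr (by linarith)).trans_le (hmass p hp1)
  have hc0 : 0 < K.c η := inv_pos.2 hIpos
  have hνc : ν * K.c η ≤ 1 / (-K.dγ 0 * r) := by
    have : K.c η ≤ (r / p)⁻¹ := inv_anti₀ (div_pos hr (by linarith)) (hmass p hp1)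
    calc ν * K.c η ≤ η / -K.dγ 0 * (r / p)⁻¹ := by rw [← hν']; gcongr
      _ = 1 / (-K.dγ 0 * r) := by rw [hpd]; field_simp
  let g : ℝ → ℝ := fun z => K.c η * (K.headPow p z + K.tailPow p z)
  have hgi : Integrable g := ((K.integrable_headPow hp1).add (K.integrable_tailPow hp1)).const_mul _
  have hgae : g =ᵐ[volume] indicator (Ioi 0) (K.γη η) := by
    filter_upwards [K.ae_head_add_tail p] with z hz
    simp only [g, hz, indicator_apply, Kernel.γη, ← hpd]
    split_ifs <;> simp
  have hnorm : ∫⁻ z, ‖g z‖ₑ = 1 := by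
    have h1 : ∫⁻ z, ‖g z‖ₑ = ∫⁻ z, ENNReal.ofReal (g z) := by
      refine lintegral_congr_ae ?_
      filter_upwards [hgae] with z hz
      rw [Real.enorm_of_nonneg]
      rw [hz]
      exact indicator_nonneg (fun x hx =>
        mul_nonneg hc0.le (Real.rpow_nonneg (K.nonneg x (le_of_lt hx)) _)) z
    rw [h1, ← ofReal_integral_eq_lintegral_ofReal hgi, integral_congr_ae hgae,
      integral_indicator measurableSet_Ioi]
    · simp only [Kernel.γη, ← hpd]
      rw [integral_const_mul, Kernel.c, ← hpd, inv_mul_cancel₀ hIpos.ne', ENNReal.ofReal_one]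
    · filter_upwards [hgae] with z hz
      rw [hz]
      exact indicator_nonneg (fun x hx =>
        mul_nonneg hc0.le (Real.rpow_nonneg (K.nonneg x (le_of_lt hx)) _)) z
  set V : ENNReal := ENNReal.ofReal (K.c η) * (2 + (1 + C * eVariationOn K.γ (Ioi 0))) with hVd
  have hV : ∀ h > 0, ∫⁻ z, ‖g (z - h) - g z‖ₑ ≤ ENNReal.ofReal h * V := by
    intro h hh
    have hH := K.integrable_headPow hp1
    calc ∫⁻ z, ‖g (z - h) - g z‖ₑ
        ≤ ∫⁻ z, ENNReal.ofReal (K.c η) * (‖K.headPow p (z - h) - K.headPow p z‖ₑ +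
            ‖K.tailPow p (z - h) - K.tailPow p z‖ₑ) := by
          refine lintegral_mono fun z => ?_
          rw [show g (z - h) - g z = K.c η * ((K.headPow p (z - h) - K.headPow p z) +
            (K.tailPow p (z - h) - K.tailPow p z)) by simp only [g]; ring, enorm_mul,
            Real.enorm_of_nonneg hc0.le]
          gcongr
          exact enorm_add_le _ _
      _ = ENNReal.ofReal (K.c η) * ((∫⁻ z, ‖K.headPow p (z - h) - K.headPow p z‖ₑ) +
            ∫⁻ z, ‖K.tailPow p (z - h) - K.tailPow p z‖ₑ) := by
          rw [lintegral_const_mul' _ _ ENNReal.ofReal_ne_top, lintegral_add_left']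
          exact ((hH.comp_sub_right h).sub hH).aestronglyMeasurable.enorm
      _ ≤ ENNReal.ofReal (K.c η) * (ENNReal.ofReal h * 2 +
            ENNReal.ofReal h * (1 + C * eVariationOn K.γ (Ioi 0))) := by
          gcongr
          · exact K.lintegral_shift_head_le hp1 hh
          · exact K.lintegral_shift_tail_le hp1 hh hm1 hm (hCp p hp)
      _ = _ := by rw [hVd]; ring
  obtain ⟨hE, hEM⟩ := Eop_prop hν hqc hM
  -- the second factor is `q`, since `ν E' = E - q`
  have hW : Wop (K.γη η) q = fun x => ∫ z, g z *
      (Eop ν q (x + z) - ν * ((Eop ν q (x + z) - q (x + z)) / ν)) := by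
    funext x
    rw [Wop, ← integral_indicator measurableSet_Ioi, ← integral_add_left_eq_self _ x]
    refine integral_congr_ae ?_
    filter_upwards [hgae] with z hz
    rw [hz, mul_div_cancel₀ _ hν.ne', sub_sub_cancel]
    simp [indicator_apply]
  have hE' : ∀ x, |(Eop ν q x - q x) / ν| ≤ (M + M) / ν := fun x => by
    rw [abs_div, abs_of_pos hν]
    gcongr
    exact (abs_sub _ _).trans (add_le_add (hEM x) (hM x))
  rw [hW]
  refine (eVariationOn_conv_sub_deriv_le hgi hν.le hV hE hEM hE').trans ?_
  gcongr
  have hVr : ENNReal.ofReal ν * V = ENNReal.ofReal (ν * K.c η * (3 + C * T)) := by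
    rw [hVd, ← mul_assoc, ← ENNReal.ofReal_mul hν.le, ENNReal.ofReal_mul (p := ν * K.c η)
      (by positivity), ENNReal.ofReal_add (by norm_num) (by positivity),
      ENNReal.ofReal_mul (p := (C : ℝ)) (by positivity), hTd, ENNReal.ofReal_toReal hT, ENNReal.ofReal_coe_nnreal,
      ← add_assoc]
    norm_num
  rw [hnorm, hVr, ← ENNReal.ofReal_one, ← ENNReal.ofReal_add zero_le_one (by positivity)]
  refine ENNReal.ofReal_le_ofReal (add_le_add ?_ ?_)
  · rw [le_div_iff₀ (by linarith)]; linarith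
  · gcongr
end
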